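/- arXiv:2408.05871 — 2 statements merged into one kernel-verified Lean document; each statement's English description precedes it below -/
import Mathlib

section
/- There exists a function c : ℕ → ℕ such that for every convexity space (X, C) with Radon number r(X, C) ≤ r and every integer k ≥ 2, the k-th Tverberg number satisfies t_k(X, C) ≤ c(r) · k; that is, every subset of X of size at least c(r) · k admits a Tverberg k-partition. -/
open scoped Classical

universe u

section SetSystems

variable {X : Type*}

/-- A finite family of sets is intersecting if all of its members have a common element. -/
def IsIntersecting (F : Finset (Set X)) : Prop :=
  ∃ x, ∀ K ∈ F, x ∈ K

/-- A convexity space: `∅` and the whole space are convex, convexity is closed under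
arbitrary (nonempty) intersections and under unions of (nonempty) chains. -/
def IsConvexitySpace (C : Set (Set X)) : Prop :=
  ∅ ∈ C ∧ Set.univ ∈ C ∧
    (∀ D ⊆ C, D.Nonempty → ⋂₀ D ∈ C) ∧
    (∀ D ⊆ C, D.Nonempty → IsChain (· ⊆ ·) D → ⋃₀ D ∈ C)

/-- The convex hull of `Y`: intersection of all convex sets containing `Y`. -/
def convHull (C : Set (Set X)) (Y : Set X) : Set X :=
  ⋂₀ {K | K ∈ C ∧ Y ⊆ K}

/-- `Y` admits a Radon partition: a partition into two disjoint parts whose hulls meet. -/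
def HasRadonPartition (C : Set (Set X)) (Y : Finset X) : Prop :=
  ∃ A B : Finset X, (↑A ∪ ↑B : Set X) = ↑Y ∧ Disjoint (↑A : Set X) (↑B : Set X) ∧
    (convHull C ↑A ∩ convHull C ↑B).Nonempty

/-- The Radon number is at most `n`: every finite subset of size at least `n`
admits a Radon partition. -/
def RadonLE (C : Set (Set X)) (n : ℕ) : Prop :=
  ∀ Y : Finset X, n ≤ Y.card → HasRadonPartition C Y

/-- `Y` admits a Tverberg `k`-partition: a partition into `k` pairwise disjoint parts
whose hulls have a common point. -/
def HasTverbergPartition (C : Set (Set X)) (k : ℕ) (Y : Finset X) : Prop :=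
  ∃ P : Fin k → Finset X, (⋃ i, (↑(P i) : Set X)) = ↑Y ∧
    (∀ i j, i ≠ j → Disjoint (↑(P i) : Set X) (↑(P j) : Set X)) ∧
    (⋂ i, convHull C ↑(P i)).Nonempty

/-- A minimally non-intersecting family: not intersecting, but every proper subfamily
obtained by deleting one member is intersecting. -/
def MinNonIntersecting (F : Finset (Set X)) : Prop :=
  ¬ IsIntersecting F ∧ ∀ K ∈ F, IsIntersecting (F.erase K)

/-- The Helly number of the set system `S` is at most `n`. -/
def HellyLE (S : Set (Set X)) (n : ℕ) : Prop :=
  ∀ F : Finset (Set X), ↑F ⊆ S → MinNonIntersecting F → F.card ≤ n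

/-- The colorful Helly number of the set system `S` is at most `m`. -/
def ColorfulHellyLE (S : Set (Set X)) (m : ℕ) : Prop :=
  ∀ F : Fin m → Finset (Set X), (∀ i, ↑(F i) ⊆ S) →
    (∀ K : Fin m → Set X, (∀ i, K i ∈ F i) → (⋂ i, K i).Nonempty) →
    ∃ i, IsIntersecting (F i)

/-- `S` satisfies the fractional Helly property for `k`-tuples with function `β`. -/
def FracHelly (S : Set (Set X)) (k : ℕ) (β : ℝ → ℝ) : Prop :=
  ∀ α ∈ Set.Ioo (0 : ℝ) 1, ∀ F : Finset (Set X), ↑F ⊆ S →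
    α * (F.card.choose k : ℝ) ≤
      (((F.powersetCard k).filter (fun G => IsIntersecting G)).card : ℝ) →
    ∃ G ⊆ F, IsIntersecting G ∧ β α * (F.card : ℝ) ≤ (G.card : ℝ)

/-- The transversal number of the finite family `F` is at most `n`: `F` can be
partitioned into (at most) `n` intersecting subfamilies. -/
def TransversalLE (F : Finset (Set X)) (n : ℕ) : Prop :=
  ∃ P : Fin n → Finset (Set X), (∀ i, P i ⊆ F) ∧ (∀ K ∈ F, ∃! i, K ∈ P i) ∧
    ∀ i, (P i).Nonempty → IsIntersecting (P i)

/-- The fractional transversal number of `F` is at most `t`: there is a finitely supported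
fractional transversal of total weight at most `t`. -/
def FracTransversalLE (F : Finset (Set X)) (t : ℝ) : Prop :=
  ∃ f : X →₀ ℝ, (∀ x, 0 ≤ f x ∧ f x ≤ 1) ∧
    (∀ S ∈ F, 1 ≤ ∑ x ∈ f.support.filter (fun x => x ∈ S), f x) ∧
    (∑ x ∈ f.support, f x) ≤ t

/-- The weak ε-net property: there is a function `g` bounding the transversal number of
every finite subfamily in terms of its fractional transversal number. -/
def WeakEpsNetProp (S : Set (Set X)) : Prop :=
  ∃ g : ℝ → ℕ, ∀ F : Finset (Set X), ↑F ⊆ S → ∀ t : ℝ,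
    FracTransversalLE F t → (∀ s : ℝ, FracTransversalLE F s → t ≤ s) →
    TransversalLE F (g t)

/-- The `(p,q)`-property: among any `p` members (with repetition allowed) some `q`
of them are intersecting. -/
def PQProperty (F : Finset (Set X)) (p q : ℕ) : Prop :=
  ∀ K : Fin p → Set X, (∀ i, K i ∈ F) →
    ∃ s : Finset (Fin p), s.card = q ∧ ∃ x, ∀ i ∈ s, x ∈ K i

/-- A compact set system: every subsystem with empty total intersection contains a
finite subfamily with empty intersection. -/
def CompactSystem (S : Set (Set X)) : Prop :=
  ∀ T ⊆ S, ⋂₀ T = ∅ → ∃ F : Finset (Set X), ↑F ⊆ T ∧ ⋂₀ (↑F : Set (Set X)) = ∅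

/-- The VC-dimension of `S` is at most `d`: every finite set shattered by `S` has
size at most `d`. -/
def VCDimLE (S : Set (Set X)) (d : ℕ) : Prop :=
  ∀ Y : Finset X, (∀ Z ⊆ Y, ∃ K ∈ S, (↑Y : Set X) ∩ K = ↑Z) → Y.card ≤ d

/-- `S^∩`: all intersections of nonempty subcollections of `S`. -/
def interClosure (S : Set (Set X)) : Set (Set X) :=
  {T | ∃ D ⊆ S, D.Nonempty ∧ T = ⋂₀ D}

end SetSystems

section Hypergraphs

variable {V : Type*} [DecidableEq V]

/-- An independent set of the hypergraph with edge set `E`: contains no edge. -/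
def IsIndep (E : Finset (Finset V)) (I : Set V) : Prop :=
  ∀ e ∈ E, ¬ ((↑e : Set V) ⊆ I)

/-- A maximal independent set. -/
def IsMaxIndep (E : Finset (Finset V)) (I : Set V) : Prop :=
  IsIndep E I ∧ ∀ J : Set V, IsIndep E J → I ⊆ J → J = I

/-- The ground set of the associated convexity space: the maximal independent sets. -/
abbrev MIS (E : Finset (Finset V)) : Type _ := {σ : Set V // IsMaxIndep E σ}

/-- `S_W`: the maximal independent sets containing `W`. -/
def SW (E : Finset (Finset V)) (W : Set V) : Set (MIS E) :=
  {σ : MIS E | W ⊆ σ.1}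

/-- The associated convexity space of the hypergraph with edge set `E`. -/
def assocC (E : Finset (Finset V)) : Set (Set (MIS E)) :=
  {T | ∃ W : Set V, T = SW E W}

/-- Property `T_k(m)`: among any `m` (not necessarily distinct) edges, some `k` of them
admit a system of distinct representatives which is an edge. -/
def PropT (E : Finset (Finset V)) (k m : ℕ) : Prop :=
  ∀ e : Fin m → Finset V, (∀ i, e i ∈ E) →
    ∃ (g : Fin k → Fin m) (v : Fin k → V), StrictMono g ∧ Function.Injective v ∧
      (∀ j, v j ∈ e (g j)) ∧ Finset.image v Finset.univ ∈ E

/-- The chromatic number of the hypergraph is at most `n`: the vertex set can be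
partitioned into (at most) `n` independent sets. -/
def ChromaticLE (E : Finset (Finset V)) (n : ℕ) : Prop :=
  ∃ P : Fin n → Set V, (∀ v : V, ∃! i, v ∈ P i) ∧
    ∀ i, (P i).Nonempty → IsIndep E (P i)

/-- The clique number is at most `w`: every set of vertices all of whose `k`-element
subsets are edges has size at most `w`. -/
def CliqueNumLE (E : Finset (Finset V)) (k w : ℕ) : Prop :=
  ∀ Q : Finset V, (∀ q ⊆ Q, q.card = k → q ∈ E) → Q.card ≤ w

/-- Property `δ_k(m)`: any sunflower of `m` edges contains `k` edges admitting a system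
of distinct representatives which is an edge. -/
def PropDelta (E : Finset (Finset V)) (k m : ℕ) : Prop :=
  ∀ G : Finset (Finset V), G ⊆ E → G.card = m →
    (∃ S : Finset V, ∀ e ∈ G, ∀ e' ∈ G, e ≠ e' → e ∩ e' = S) →
    ∃ (f : Fin k → Finset V) (v : Fin k → V), Function.Injective f ∧ (∀ j, f j ∈ G) ∧
      Function.Injective v ∧ (∀ j, v j ∈ f j) ∧ Finset.image v Finset.univ ∈ E

end Hypergraphs

/-!
Iterating Radon partitions shows that any `r ^ m` points have a Tverberg `m`-partition. Hence, among
the `m`-tuples of `T`-tuples of points of `Y`, where `T` has `r ^ m` elements, a positive proportion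
(independent of `Y`) have hulls with a common point. A fractional Helly theorem then gives a point
`q` in the hulls of a positive proportion of all `T`-tuples, and since few tuples meet a small set,
about `card Y` many pairwise disjoint ones can be chosen greedily among them.

The fractional Helly theorem follows Holmsen's argument from the Helly theorem (Radon) and the
colourful Helly theorem (Tverberg), the latter saying that there is no complete tuple of
non-intersecting families. If every large subfamily contains many non-intersecting tuples, then
supersaturation builds a complete tuple. Otherwise almost all tuples of some large subfamily `W`
intersect, and if moreover every half of `W` contained a non-intersecting tuple of the size `r`
relevant for Helly's theorem, there would again be a complete tuple. So the members of some large
subfamily have a common point.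
-/

section Density

open Finset
open scoped BigOperators

variable {ι α β V : Type*} [Fintype ι] [Fintype α] [Fintype β] [Fintype V]

lemma dens_filter_eq_expect (p : α → Prop) [DecidablePred p] :
    ({a | p a} : Finset α).dens = 𝔼 a, if p a then (1 : ℚ≥0) else 0 := by
  rw [Fintype.expect_eq_sum_div_card, dens_eq_card_div_card, card_filter, Nat.cast_sum]
  simp only [Nat.cast_ite, Nat.cast_one, Nat.cast_zero]

lemma expect_dens_comm (R : α → β → Prop) [∀ a b, Decidable (R a b)] :
    𝔼 a, ({b | R a b} : Finset β).dens = 𝔼 b, ({a | R a b} : Finset α).dens := by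
  simp only [dens_filter_eq_expect]
  exact expect_comm _ _ _

lemma dens_eq_expect_dens_cons {n : ℕ} (E : Finset (Fin (n + 1) → V)) :
    E.dens = 𝔼 y, ({w | Fin.cons y w ∈ E} : Finset (Fin n → V)).dens := by
  simp only [dens_filter_eq_expect]
  rw [← filter_univ_mem E, dens_filter_eq_expect, ← expect_product', univ_product_univ]
  exact (Fintype.expect_equiv (Fin.consEquiv fun _ => V) _ _ fun _ => by simp; rfl).symm

lemma dens_filter_mul_le_expect (f : ι → ℚ≥0) (a : ℚ≥0) :
    ({i | a ≤ f i} : Finset ι).dens * a ≤ 𝔼 i, f i := by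
  rw [dens_filter_eq_expect, expect_mul]
  refine expect_le_expect fun i _ => ?_
  split_ifs with h
  · simpa using h
  · simp

lemma half_le_dens_of_le_expect {f : ι → ℚ≥0} (hf : ∀ i, f i ≤ 1) {a : ℚ≥0}
    (ha : a ≤ 𝔼 i, f i) : a / 2 ≤ ({i | a / 2 ≤ f i} : Finset ι).dens := by
  rcases isEmpty_or_nonempty ι with _ | _
  · simp_all
  have hpoint (i : ι) : f i ≤ (if a / 2 ≤ f i then 1 else 0) + a / 2 := by
    split_ifs with h
    · exact (hf i).trans le_self_add
    · simpa using (not_le.1 h).le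
  have hsplit : a / 2 + a / 2 ≤ ({i | a / 2 ≤ f i} : Finset ι).dens + a / 2 :=
    calc a / 2 + a / 2 = a := add_halves a
      _ ≤ 𝔼 i, f i := ha
      _ ≤ 𝔼 i, ((if a / 2 ≤ f i then 1 else 0) + a / 2) := expect_le_expect fun i _ => hpoint i
      _ = ({i | a / 2 ≤ f i} : Finset ι).dens + a / 2 := by
        rw [expect_add_distrib, Fintype.expect_const, dens_filter_eq_expect]
  exact le_of_add_le_add_right hsplit

lemma exists_dens_mul_le_dens [Nonempty α] (R : α → β → Prop) [∀ a b, Decidable (R a b)]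
    {B : Finset β} {δ : ℚ≥0} (hB : ∀ b ∈ B, δ ≤ ({a | R a b} : Finset α).dens) :
    ∃ a, B.dens * δ ≤ ({b | R a b} : Finset β).dens := by
  have haverage : B.dens * δ ≤ 𝔼 a, ({b | R a b} : Finset β).dens :=
    calc B.dens * δ ≤ ({b | δ ≤ ({a | R a b} : Finset α).dens} : Finset β).dens * δ := by
          gcongr
          exact fun b hb => mem_filter.2 ⟨mem_univ b, hB b hb⟩
      _ ≤ 𝔼 b, ({a | R a b} : Finset α).dens := dens_filter_mul_le_expect _ _
      _ = 𝔼 a, ({b | R a b} : Finset β).dens := (expect_dens_comm R).symm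
  obtain ⟨a, -, ha⟩ := exists_le_of_le_expect univ_nonempty haverage
  exact ⟨a, ha⟩

lemma dens_eval_mem {T Y : Type*} [Fintype T] [DecidableEq T] [Fintype Y] [Nonempty Y] (t : T)
    (Q : Finset Y) :
    ({v | v t ∈ Q} : Finset (T → Y)).dens = Q.dens := by
  have himage : ({v | v t ∈ Q} : Finset (T → Y)).map (Equiv.funSplitAt t Y).toEmbedding =
      Q ×ˢ univ := by
    ext ⟨y, v⟩
    simp [Equiv.funSplitAt]
  rw [← dens_map_equiv (Equiv.funSplitAt t Y), himage, dens_eq_card_div_card,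
    dens_eq_card_div_card, card_product, card_univ, Fintype.card_prod]
  push_cast
  exact mul_div_mul_right _ _ (mod_cast Fintype.card_ne_zero)

lemma dens_map_subtype (W : Finset V) (S : Finset W) :
    (S.map (.subtype (· ∈ W))).dens = S.dens * W.dens := by
  rcases W.eq_empty_or_nonempty with rfl | hW
  · simp [eq_empty_of_isEmpty S]
  have hcard : (W.card : ℚ≥0) ≠ 0 := mod_cast hW.card_ne_zero
  rw [dens_eq_card_div_card, dens_eq_card_div_card, dens_eq_card_div_card, card_map,
    Fintype.card_coe, div_mul_div_cancel₀ hcard]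

lemma dens_subtype_mul_pow [DecidableEq ι] (W : Finset V) (p : (ι → V) → Prop)
    [DecidablePred p] :
    ({u | p fun i => u i} : Finset (ι → W)).dens * W.dens ^ Fintype.card ι =
      ({u ∈ Fintype.piFinset fun _ => W | p u} : Finset (ι → V)).dens := by
  let lift : (ι → W) ↪ (ι → V) := ⟨fun u i => u i, Subtype.val_injective.comp_left⟩
  have himage : ({u ∈ Fintype.piFinset fun _ => W | p u} : Finset (ι → V)) =
      ({u | p fun i => u i} : Finset (ι → W)).map lift := by
    ext u
    simp only [mem_filter, mem_univ, true_and, mem_map, Fintype.mem_piFinset]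
    exact ⟨fun h => ⟨fun i => ⟨u i, h.1 i⟩, h.2, rfl⟩,
      fun ⟨v, hv, hvu⟩ => hvu ▸ ⟨fun i => (v i).2, hv⟩⟩
  rw [himage, dens_eq_card_div_card, dens_eq_card_div_card, dens_eq_card_div_card, card_map,
    Fintype.card_fun, Fintype.card_fun, Fintype.card_coe, div_pow, Nat.cast_pow, Nat.cast_pow]
  rcases eq_or_ne ((W.card : ℚ≥0) ^ Fintype.card ι) 0 with hzero | hzero
  · have : IsEmpty (ι → W) := Fintype.card_eq_zero_iff.1 <| by
      rw [Fintype.card_fun, Fintype.card_coe]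
      exact_mod_cast hzero
    simp [eq_empty_of_isEmpty]
  · exact div_mul_div_cancel₀ hzero

end Density

section CompleteTuples

open Finset

variable {V κ : Type*}

/-- `E` contains every transversal of some `j` members of `M`. When `M` is the set of missing edges
of a hypergraph, these members form what Holmsen calls a complete `j`-tuple of missing edges. -/
def HasCompleteTuple {j : ℕ} (M : Set (κ → V)) (E : Finset (Fin j → V)) : Prop :=
  ∃ e : Fin j → κ → V, (∀ i, e i ∈ M) ∧ ∀ σ : Fin j → κ, (fun i => e i (σ i)) ∈ E

namespace HasCompleteTuple

variable {M : Set (κ → V)} {j : ℕ}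

lemma mono {E E' : Finset (Fin j → V)} (h : HasCompleteTuple M E) (hE : E ⊆ E') :
    HasCompleteTuple M E' :=
  let ⟨e, he, hσ⟩ := h
  ⟨e, he, fun σ => hE (hσ σ)⟩

lemma of_nonempty {E : Finset (Fin 0 → V)} (hE : E.Nonempty) : HasCompleteTuple M E := by
  obtain ⟨w, hw⟩ := hE
  exact ⟨Fin.elim0, Fin.rec0, fun σ => by rwa [Subsingleton.elim (fun i => _) w]⟩

lemma cons [Fintype V] {E : Finset (Fin (j + 1) → V)} {e₀ : κ → V} (he₀ : e₀ ∈ M)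
    (h : HasCompleteTuple M ({w | ∀ a, Fin.cons (e₀ a) w ∈ E} : Finset (Fin j → V))) :
    HasCompleteTuple M E := by
  obtain ⟨e, he, hσ⟩ := h
  refine ⟨Fin.cons e₀ e, Fin.cases he₀ he, fun σ => ?_⟩
  convert (mem_filter.1 (hσ fun i => σ i.succ)).2 (σ 0) using 1
  exact funext (Fin.cases rfl fun _ => rfl)

end HasCompleteTuple

variable [Fintype V]

section AlmostAllTuples

open scoped BigOperators

variable [Fintype κ] [Nonempty κ]

lemma exists_mem_dens_cons_notMem_lt [Nonempty V] {j : ℕ} {M : Set (κ → V)}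
    (hM : ∀ S : Finset V, 1 / 2 < S.dens → ∃ e ∈ M, ∀ a, e a ∈ S)
    {E : Finset (Fin (j + 1) → V)} {ε : ℚ≥0}
    (hE : ({w | w ∉ E} : Finset (Fin (j + 1) → V)).dens < ε / (2 * Fintype.card κ)) :
    ∃ e ∈ M, ({w | ¬ ∀ a, Fin.cons (e a) w ∈ E} : Finset (Fin j → V)).dens < ε := by
  let f (y : V) : ℚ≥0 := ({w | Fin.cons y w ∉ E} : Finset (Fin j → V)).dens
  have hκ : (0 : ℚ≥0) < Fintype.card κ := mod_cast Fintype.card_pos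
  have hε : 0 < ε / Fintype.card κ :=
    pos_iff_ne_zero.2 fun h => by simp [← div_div, div_right_comm ε 2, h] at hE
  have hmarkov : ({y | ε / Fintype.card κ ≤ f y} : Finset V).dens < 1 / 2 := by
    refine lt_of_mul_lt_mul_right ?_ hε.le
    calc _ ≤ 𝔼 y, f y := dens_filter_mul_le_expect f _
      _ = ({w | w ∉ E} : Finset (Fin (j + 1) → V)).dens := by simp [dens_eq_expect_dens_cons, f]
      _ < ε / (2 * Fintype.card κ) := hE
      _ = 1 / 2 * (ε / Fintype.card κ) := by ring
  have hgood : 1 / 2 < ({y | f y < ε / Fintype.card κ} : Finset V).dens := by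
    have hcompl := dens_filter_add_dens_filter_not_eq_dens (s := (univ : Finset V))
      fun y => f y < ε / Fintype.card κ
    simp only [not_lt, dens_univ] at hcompl
    refine lt_of_add_lt_add_right (a := (1 / 2 : ℚ≥0)) ?_
    calc (1 / 2 : ℚ≥0) + 1 / 2 = 1 := add_halves 1
      _ = _ := hcompl.symm
      _ < _ := by gcongr
  obtain ⟨e, he, hf⟩ := hM _ hgood
  refine ⟨e, he, ?_⟩
  calc ({w | ¬ ∀ a, Fin.cons (e a) w ∈ E} : Finset (Fin j → V)).dens
      = (univ.biUnion fun a => ({w | Fin.cons (e a) w ∉ E} : Finset (Fin j → V))).dens := by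
        congr 1
        ext w
        simp
    _ ≤ ∑ a, f (e a) := dens_biUnion_le
    _ < ∑ _a : κ, ε / Fintype.card κ :=
        sum_lt_sum_of_nonempty univ_nonempty fun a _ => (mem_filter.1 (hf a)).2
    _ = ε := by simp [mul_div_cancel₀ _ hκ.ne']

theorem hasCompleteTuple_of_dens_notMem_lt [Nonempty V] {M : Set (κ → V)}
    (hM : ∀ S : Finset V, 1 / 2 < S.dens → ∃ e ∈ M, ∀ a, e a ∈ S) {j : ℕ}
    {E : Finset (Fin j → V)}
    (hE : ({w | w ∉ E} : Finset (Fin j → V)).dens < (1 / (2 * Fintype.card κ)) ^ j) :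
    HasCompleteTuple M E := by
  induction j with
  | zero =>
    refine .of_nonempty (nonempty_iff_ne_empty.2 ?_)
    rintro rfl
    simp at hE
  | succ j ih =>
    obtain ⟨e₀, he₀, hlink⟩ := exists_mem_dens_cons_notMem_lt hM
      (hE.trans_eq (by rw [pow_succ, mul_one_div]))
    exact .cons he₀ (ih (by simpa using hlink))

theorem hasCompleteTuple_of_dens_notMem_inter_lt {M : Set (κ → V)} {W : Finset V}
    (hW : W.Nonempty) (hM : ∀ S : Finset V, W.dens / 2 < S.dens → ∃ e ∈ M, ∀ a, e a ∈ S)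
    {j : ℕ} {E : Finset (Fin j → V)}
    (hE : ({w ∈ Fintype.piFinset fun _ => W | w ∉ E} : Finset (Fin j → V)).dens <
      (1 / (2 * Fintype.card κ)) ^ j * W.dens ^ j) :
    HasCompleteTuple M E := by
  have := hW.to_subtype
  have hM' (S : Finset W) (hS : 1 / 2 < S.dens) :
      ∃ e ∈ {e : κ → W | (fun a => (e a : V)) ∈ M}, ∀ a, e a ∈ S := by
    obtain ⟨e, he, heS⟩ := hM (S.map (.subtype (· ∈ W))) (by
      rw [dens_map_subtype, div_eq_inv_mul, ← one_div]
      exact mul_lt_mul_of_pos_right hS (dens_pos.2 hW))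
    choose e' he'S he' using fun a => mem_map.1 (heS a)
    obtain rfl : (fun a => (e' a : V)) = e := funext he'
    exact ⟨e', he, he'S⟩
  have hE' : ({w | (fun i => (w i : V)) ∉ E} : Finset (Fin j → W)).dens * W.dens ^ j =
      ({w ∈ Fintype.piFinset fun _ => W | w ∉ E} : Finset (Fin j → V)).dens := by
    simpa only [Fintype.card_fin] using dens_subtype_mul_pow W fun w : Fin j → V => w ∉ E
  have hsparse := lt_of_mul_lt_mul_right (hE'.trans_lt hE) (pow_pos (dens_pos.2 hW) j).le
  obtain ⟨e, he, hσ⟩ := hasCompleteTuple_of_dens_notMem_lt hM'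
    (E := {w | (fun i => (w i : V)) ∈ E}) (by simpa using hsparse)
  exact ⟨fun i a => e i a, he, fun σ => by simpa using hσ σ⟩

end AlmostAllTuples

section PositiveDensity

lemma exists_notMem_le_dens_cons_mem {ι : Type*} [Fintype ι] [DecidableEq ι]
    {G : Finset (ι → V)} {ε α : ℚ≥0} (hε : 0 < ε) (hα : 0 < α)
    (hG : ∀ W : Finset V, α / 2 ≤ W.dens → ε * W.dens ^ Fintype.card ι ≤
      ({u ∈ Fintype.piFinset fun _ => W | u ∉ G} : Finset (ι → V)).dens)
    {j : ℕ} {E : Finset (Fin (j + 1) → V)} (hE : α ≤ E.dens) :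
    ∃ u ∉ G, α / 2 * (ε * (α / 2) ^ Fintype.card ι) ≤
      ({w | ∀ i, Fin.cons (u i) w ∈ E} : Finset (Fin j → V)).dens := by
  have hV : Nonempty V := by
    obtain ⟨w, -⟩ := dens_pos.1 (hα.trans_le hE)
    exact ⟨w 0⟩
  let N (w : Fin j → V) : Finset V := {y | Fin.cons y w ∈ E}
  let R (u : ι → V) (w : Fin j → V) : Prop :=
    u ∈ ({u ∈ Fintype.piFinset fun _ => N w | u ∉ G} : Finset (ι → V))
  have hrich : α / 2 ≤ ({w | α / 2 ≤ (N w).dens} : Finset (Fin j → V)).dens :=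
    half_le_dens_of_le_expect (fun _ => dens_le_one)
      (hE.trans_eq ((dens_eq_expect_dens_cons E).trans (expect_dens_comm _)))
  obtain ⟨u, hu⟩ := exists_dens_mul_le_dens R (B := {w | α / 2 ≤ (N w).dens})
    (δ := ε * (α / 2) ^ Fintype.card ι) fun w hw => by
      have hw : α / 2 ≤ (N w).dens := (mem_filter.1 hw).2
      calc ε * (α / 2) ^ Fintype.card ι ≤ ε * (N w).dens ^ Fintype.card ι := by gcongr
        _ ≤ ({u | R u w} : Finset (ι → V)).dens := by
          rw [filter_univ_mem]
          exact hG (N w) hw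
  replace hu := (mul_le_mul_left hrich _).trans hu
  have hpos : 0 < α / 2 * (ε * (α / 2) ^ Fintype.card ι) := by positivity
  obtain ⟨w, hw⟩ := dens_pos.1 (hpos.trans_le hu)
  have hRw {w : Fin j → V} (hw : R u w) : (∀ i, Fin.cons (u i) w ∈ E) ∧ u ∉ G := by
    simpa only [R, N, mem_filter, Fintype.mem_piFinset, mem_univ, true_and] using hw
  exact ⟨u, (hRw (mem_filter.1 hw).2).2,
    hu.trans (dens_le_dens (monotone_filter_right _ fun w _ hw => (hRw hw).1))⟩

theorem exists_pos_hasCompleteTuple_of_le_dens (ι κ : Type*) [Fintype ι] [DecidableEq ι]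
    {ε : ℚ≥0} (hε : 0 < ε) (j : ℕ) {α : ℚ≥0} (hα : 0 < α) :
    ∃ γ > (0 : ℚ≥0), ∀ (V : Type u) [Fintype V] (M : Set (κ → V)) (G : Finset (ι → V)),
      (∀ u ∉ G, ∃ σ : κ → ι, u ∘ σ ∈ M) →
      (∀ W : Finset V, γ ≤ W.dens → ε * W.dens ^ Fintype.card ι ≤
        ({u ∈ Fintype.piFinset fun _ => W | u ∉ G} : Finset (ι → V)).dens) →
      ∀ E : Finset (Fin j → V), α ≤ E.dens → HasCompleteTuple M E := by
  induction j generalizing α with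
  | zero => exact ⟨1, one_pos, fun V _ M G _ _ E hE => .of_nonempty (dens_pos.1 (hα.trans_le hE))⟩
  | succ j ih =>
    obtain ⟨γ, hγ, ih⟩ := ih (α := α / 2 * (ε * (α / 2) ^ Fintype.card ι)) (by positivity)
    refine ⟨min (α / 2) γ, by positivity, fun V _ M G hGM hG E hE => ?_⟩
    obtain ⟨u, huG, hu⟩ := exists_notMem_le_dens_cons_mem hε hα
      (fun W hW => hG W ((min_le_left _ _).trans hW)) hE
    obtain ⟨σ, hσ⟩ := hGM u huG
    refine .cons hσ ((ih V M G hGM (fun W hW => hG W ((min_le_right _ _).trans hW)) _ hu).mono ?_)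
    exact monotone_filter_right _ fun w _ hw a => hw (σ a)

end PositiveDensity

theorem exists_pos_exists_le_dens_forall_exists_notMem (κ : Type*) [Finite κ] [Nonempty κ]
    (m : ℕ) {α : ℚ≥0} (hα : 0 < α) :
    ∃ β > (0 : ℚ≥0), ∀ (V : Type u) [Fintype V] (M : Set (κ → V)) (G : Finset (Fin m → V)),
      (∀ u ∉ G, ∃ σ : κ → Fin m, u ∘ σ ∈ M) → ¬ HasCompleteTuple M G → α ≤ G.dens →
      ∃ S : Finset V, β ≤ S.dens ∧ ∀ e ∈ M, ∃ a, e a ∉ S := by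
  have := Fintype.ofFinite κ
  obtain ⟨γ, hγ, hdense⟩ := exists_pos_hasCompleteTuple_of_le_dens.{u} (Fin m) κ
    (ε := (1 / (2 * Fintype.card κ)) ^ m) (by positivity) m hα
  refine ⟨γ / 2, by positivity, fun V _ M G hGM hG hαG => ?_⟩
  -- Both alternatives yield a complete tuple in `G`: either every large `W` supports many tuples
  -- outside `G`, or some large `W` supports so few that almost all tuples in `W` lie in `G`.
  by_contra! hM
  refine hG (hdense V M G hGM (fun W hW => ?_) G hαG)
  by_contra! hsparse
  refine hG (hasCompleteTuple_of_dens_notMem_inter_lt (dens_pos.1 (hγ.trans_le hW))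
    (fun S hS => hM S ((div_le_div_of_nonneg_right hW zero_le).trans hS.le)) ?_)
  simpa using hsparse

end CompleteTuples

section GreedyChoice

open Finset

variable {T Y : Type*} [Fintype T] [DecidableEq T] [Fintype Y] {S : Finset (T → Y)}

lemma exists_mem_forall_notMem_of_card_mul_dens_lt [Nonempty Y] {Q : Finset Y}
    (h : Fintype.card T * Q.dens < S.dens) : ∃ v ∈ S, ∀ t, v t ∉ Q := by
  by_contra! hS
  have hcover : S ⊆ univ.biUnion fun t => ({v | v t ∈ Q} : Finset (T → Y)) := fun v hv => by
    simpa using hS v hv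
  refine h.not_ge ?_
  calc S.dens ≤ ∑ t, ({v | v t ∈ Q} : Finset (T → Y)).dens :=
        (dens_le_dens hcover).trans dens_biUnion_le
    _ = Fintype.card T * Q.dens := by simp [dens_eval_mem]

lemma exists_pairwise_disjoint_range {k : ℕ}
    (hS : (Fintype.card T : ℚ≥0) ^ 2 * k < S.dens * Fintype.card Y) :
    ∃ v : Fin k → T → Y, (∀ i, v i ∈ S) ∧
      Pairwise fun i j => Disjoint (Set.range (v i)) (Set.range (v j)) := by
  have hY : (0 : ℚ≥0) < Fintype.card Y := pos_of_mul_pos_right (zero_le.trans_lt hS) zero_le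
  have : Nonempty Y := Fintype.card_pos_iff.1 (mod_cast hY)
  induction k with
  | zero => exact ⟨Fin.elim0, Fin.rec0, fun i => i.elim0⟩
  | succ k ih =>
    push_cast at hS
    have hS' : (Fintype.card T : ℚ≥0) ^ 2 * k < S.dens * Fintype.card Y :=
      lt_of_le_of_lt (by gcongr; exact le_self_add) hS
    obtain ⟨v, hvS, hv⟩ := ih hS'
    let Q : Finset Y := univ.image fun p : Fin k × T => v p.1 p.2
    have hQ : (Q.card : ℚ≥0) ≤ k * Fintype.card T := by
      exact_mod_cast card_image_le.trans_eq (by simp)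
    obtain ⟨v₀, hv₀S, hv₀⟩ := exists_mem_forall_notMem_of_card_mul_dens_lt (S := S) (Q := Q) (by
      refine lt_of_mul_lt_mul_right ?_ hY.le
      calc Fintype.card T * Q.dens * Fintype.card Y = Fintype.card T * Q.card := by
            rw [mul_assoc, dens_mul_card]
        _ ≤ Fintype.card T * (k * Fintype.card T) := by gcongr
        _ = (Fintype.card T : ℚ≥0) ^ 2 * k := by ring
        _ < S.dens * Fintype.card Y := hS')
    have : Std.Symm fun i j : Fin (k + 1) => Disjoint
        (Set.range ((Fin.cons v₀ v : Fin (k + 1) → T → Y) i))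
        (Set.range ((Fin.cons v₀ v : Fin (k + 1) → T → Y) j)) := ⟨fun _ _ h => h.symm⟩
    refine ⟨Fin.cons v₀ v, Fin.cases hv₀S hvS,
      pairwise_fin_succ_iff_of_isSymm.2 ⟨fun j => ?_, hv⟩⟩
    rw [Set.disjoint_left]
    rintro _ ⟨t, rfl⟩ ⟨t', ht'⟩
    exact hv₀ t (mem_image.2 ⟨(j, t'), mem_univ _, ht'⟩)

end GreedyChoice

section ConvexHulls

variable {X : Type*} {C : Set (Set X)} {Y Z : Set X}

lemma subset_convHull : Y ⊆ convHull C Y :=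
  Set.subset_sInter fun _ hK => hK.2

lemma convHull_min (h : Z ⊆ convHull C Y) : convHull C Z ⊆ convHull C Y :=
  Set.subset_sInter fun _ hK =>
    Set.sInter_subset_of_mem ⟨hK.1, h.trans (Set.sInter_subset_of_mem hK)⟩

lemma convHull_mono (h : Z ⊆ Y) : convHull C Z ⊆ convHull C Y :=
  convHull_min (h.trans subset_convHull)

lemma HasTverbergPartition.of_pairwise_disjoint {k : ℕ} (hk : 0 < k) {Y : Finset X}
    {P : Fin k → Set X} (hPY : ∀ i, P i ⊆ Y) (hP : Pairwise fun i j => Disjoint (P i) (P j))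
    {q : X} (hq : ∀ i, q ∈ convHull C (P i)) : HasTverbergPartition C k Y := by
  have hcolour (x : X) : ∃ i, ∀ j, x ∈ P j → i = j := by
    by_cases hx : ∃ i, x ∈ P i
    · obtain ⟨i, hi⟩ := hx
      exact ⟨i, fun j hj => hP.eq (Set.not_disjoint_iff.2 ⟨x, hi, hj⟩)⟩
    · exact ⟨⟨0, hk⟩, fun j hj => (hx ⟨j, hj⟩).elim⟩
  choose c hc using hcolour
  refine ⟨fun i => {x ∈ Y | c x = i}, ?_, fun i j hij => ?_, q, Set.mem_iInter.2 fun i => ?_⟩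
  · ext x
    simp
  · exact Finset.disjoint_coe.2 (Finset.disjoint_filter.2 fun x _ hi hj => hij (hi.symm.trans hj))
  · exact convHull_mono (fun x hx => by simpa using ⟨hPY i hx, hc x i hx⟩) (hq i)

end ConvexHulls

section Tverberg

variable {X κ κ' ι ι' : Type*} {C : Set (Set X)} {r : ℕ}

lemma RadonLE.mono (h : RadonLE C r) {s : ℕ} (hrs : r ≤ s) : RadonLE C s :=
  fun Y hY => h Y (hrs.trans hY)

/-- Every family of points indexed by `ι` has a Tverberg partition with parts indexed by `κ`. The
parts are the colour classes of a map `ι → κ`, so that a point taken twice counts as two points. -/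
def TverbergProperty (C : Set (Set X)) (κ ι : Type*) : Prop :=
  ∀ f : ι → X, ∃ (c : ι → κ) (q : X), ∀ j, q ∈ convHull C (f '' (c ⁻¹' {j}))

namespace TverbergProperty

lemma of_radonLE [Fintype ι] (hC : RadonLE C r) (hι : r ≤ Fintype.card ι) :
    TverbergProperty C Bool ι := by
  intro f
  by_cases hf : Function.Injective f
  · obtain ⟨A, B, hAB, hdisj, q, hqA, hqB⟩ := hC (Finset.univ.map ⟨f, hf⟩) (by simpa using hι)
    have hrange : (A ∪ B : Set X) = Set.range f := by simpa using hAB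
    refine ⟨fun i => decide (f i ∈ A), q, Bool.forall_bool.2 ⟨?_, ?_⟩⟩
    · refine convHull_mono (fun x hx => ?_) hqB
      obtain ⟨i, rfl⟩ := hrange.subset (.inr hx)
      exact ⟨i, by simpa using hdisj.notMem_of_mem_right hx, rfl⟩
    · refine convHull_mono (fun x hx => ?_) hqA
      obtain ⟨i, rfl⟩ := hrange.subset (.inl hx)
      exact ⟨i, by simpa using hx, rfl⟩
  · obtain ⟨a, b, hab, hne⟩ := Function.not_injective_iff.1 hf
    refine ⟨fun i => decide (i = a), f a, Bool.forall_bool.2 ⟨?_, ?_⟩⟩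
    · exact subset_convHull ⟨b, by simpa using hne.symm, hab.symm⟩
    · exact subset_convHull ⟨a, by simp, rfl⟩

lemma map (h : TverbergProperty C κ ι) {φ : κ → κ'} (hφ : Function.Surjective φ) (e : ι ≃ ι') :
    TverbergProperty C κ' ι' := by
  intro f
  obtain ⟨c, q, hq⟩ := h (f ∘ e)
  refine ⟨φ ∘ c ∘ e.symm, q, fun j' => ?_⟩
  obtain ⟨j, rfl⟩ := hφ j'
  refine convHull_mono ?_ (hq j)
  rintro _ ⟨i, rfl, rfl⟩
  exact ⟨e i, by simp, rfl⟩

lemma prod (h : TverbergProperty C κ ι) (h' : TverbergProperty C κ' ι') :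
    TverbergProperty C (κ × κ') (ι × ι') := by
  intro f
  choose c p hp using fun i' => h fun i => f (i, i')
  obtain ⟨c', q, hq⟩ := h' p
  refine ⟨fun x => (c x.2 x.1, c' x.2), q, fun ⟨j, j'⟩ => convHull_min ?_ (hq j')⟩
  rintro _ ⟨i', rfl, rfl⟩
  refine convHull_mono ?_ (hp i' j)
  rintro _ ⟨i, rfl, rfl⟩
  exact ⟨(i, i'), rfl, rfl⟩

lemma pow (h : TverbergProperty C κ ι) (n : ℕ) :
    TverbergProperty C (Fin n → κ) (Fin n → ι) := by
  induction n with
  | zero =>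
    intro f
    exact ⟨fun _ => default, f default, fun j =>
      subset_convHull ⟨default, Subsingleton.elim _ _, rfl⟩⟩
  | succ n ih =>
    exact (h.prod ih).map (Fin.consEquiv fun _ => κ).surjective (Fin.consEquiv fun _ => ι)

end TverbergProperty

lemma RadonLE.tverbergProperty (hC : RadonLE C r) {k : ℕ} (hk : 0 < k) :
    TverbergProperty C (Fin k) (Fin k → Fin r) := by
  have : Nonempty (Fin k) := ⟨⟨0, hk⟩⟩
  obtain ⟨φ⟩ : Nonempty (Fin k ↪ (Fin k → Bool)) :=
    Function.Embedding.nonempty_of_card_le (by simpa using k.lt_two_pow_self.le)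
  exact ((TverbergProperty.of_radonLE hC (by simp)).pow k).map
    (Function.invFun_surjective φ.injective) (.refl _)

end Tverberg

section Helly

variable {X V : Type*} {C : Set (Set X)} {F : V → Set X}

theorem RadonLE.helly [Nonempty X] {r : ℕ} (hC : RadonLE C r)
    (hF : ∀ v, convHull C (F v) ⊆ F v) {S : Finset V}
    (hS : ∀ e : Fin r → V, (∀ a, e a ∈ S) → ∃ q, ∀ a, q ∈ F (e a)) :
    ∃ q, ∀ v ∈ S, q ∈ F v := by
  induction S using Finset.strongInduction with
  | H S ih =>
  by_cases hcard : r ≤ S.card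
  · have hp (v : S) : ∃ p, ∀ w ∈ S.erase v, p ∈ F w :=
      ih _ (S.erase_ssubset v.2) fun e he => hS e fun a => Finset.mem_of_mem_erase (he a)
    choose p hp using hp
    obtain ⟨c, q, hq⟩ := TverbergProperty.of_radonLE hC (by simpa using hcard) p
    refine ⟨q, fun v hv => hF v (convHull_mono ?_ (hq !c ⟨v, hv⟩))⟩
    rintro _ ⟨w, hw, rfl⟩
    refine hp w v (Finset.mem_erase.2 ⟨?_, hv⟩)
    rintro rfl
    simp at hw
  · rcases S.eq_empty_or_nonempty with rfl | hne
    · simp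
    have := hne.to_subtype
    obtain ⟨φ⟩ : Nonempty (S ↪ Fin r) :=
      Function.Embedding.nonempty_of_card_le (by simpa using (not_le.1 hcard).le)
    obtain ⟨q, hq⟩ := hS (fun a => (Function.invFun φ a : S)) fun a => Subtype.prop _
    refine ⟨q, fun v hv => ?_⟩
    simpa [Function.leftInverse_invFun φ.injective ⟨v, hv⟩] using hq (φ ⟨v, hv⟩)

theorem TverbergProperty.colorful_helly {κ ι : Type*} (hC : TverbergProperty C κ ι)
    (hF : ∀ v, convHull C (F v) ⊆ F v) {e : (ι → κ) → κ → V}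
    (he : ∀ σ : (ι → κ) → κ, ∃ q, ∀ c, q ∈ F (e c (σ c))) :
    ∃ c q, ∀ j, q ∈ F (e c j) := by
  choose x hx using he
  obtain ⟨c, q, hq⟩ := hC fun i => x fun c => c i
  refine ⟨c, q, fun j => hF _ (convHull_mono ?_ (hq j))⟩
  rintro _ ⟨i, rfl, rfl⟩
  exact hx (fun c => c i) c

open Finset in
theorem exists_pos_forall_fractional_helly {r : ℕ} (hr : 0 < r) {α : ℚ≥0} (hα : 0 < α) :
    ∃ β > (0 : ℚ≥0), ∀ (X : Type*) (C : Set (Set X)), RadonLE C r →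
      ∀ (V : Type u) [Fintype V] (F : V → Set X), (∀ v, convHull C (F v) ⊆ F v) →
      α ≤ ({u | ∃ q, ∀ i, q ∈ F (u i)} : Finset (Fin (r ^ r ^ r) → V)).dens →
      ∃ q, β ≤ ({v | q ∈ F v} : Finset V).dens := by
  have : Nonempty (Fin r) := ⟨⟨0, hr⟩⟩
  obtain ⟨β, hβ, hdich⟩ :=
    exists_pos_exists_le_dens_forall_exists_notMem.{u} (Fin r) (r ^ r ^ r) hα
  refine ⟨β, hβ, fun X C hC V _ F hF hdens => ?_⟩
  obtain ⟨u, hu⟩ := dens_pos.1 (hα.trans_le hdens)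
  have : Nonempty X := ⟨(mem_filter.1 hu).2.choose⟩
  have hhelly (u : Fin (r ^ r ^ r) → V) (hu : ¬ ∃ q, ∀ i, q ∈ F (u i)) :
      ∃ σ : Fin r → Fin (r ^ r ^ r), ¬ ∃ q, ∀ a, q ∈ F (u (σ a)) := by
    by_contra! hsub
    obtain ⟨q, hq⟩ := hC.helly (fun i => hF (u i)) (S := univ) fun σ _ => hsub σ
    exact hu ⟨q, fun i => hq i (mem_univ i)⟩
  have hcolorful : ¬ HasCompleteTuple {e : Fin r → V | ¬ ∃ q, ∀ a, q ∈ F (e a)}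
      ({u | ∃ q, ∀ i, q ∈ F (u i)} : Finset (Fin (r ^ r ^ r) → V)) := by
    rintro ⟨e, heM, heG⟩
    let g : ((Fin r → Fin r) → Fin r) ≃ Fin (r ^ r ^ r) := Fintype.equivOfCardEq (by simp)
    obtain ⟨c, hc⟩ := (hC.tverbergProperty hr).colorful_helly hF (e := e ∘ g) fun σ => by
      obtain ⟨q, hq⟩ := (mem_filter.1 (heG (σ ∘ g.symm))).2
      exact ⟨q, fun c => by simpa using hq (g c)⟩
    exact heM (g c) hc
  obtain ⟨S, hS, hSM⟩ := hdich V _ _ (fun u hu => hhelly u (by simpa using hu)) hcolorful hdens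
  obtain ⟨q, hq⟩ := hC.helly hF (S := S) fun e he => by
    by_contra hM
    obtain ⟨a, ha⟩ := hSM e hM
    exact ha (he a)
  exact ⟨q, hS.trans (dens_le_dens fun v hv => by simpa using hq v hv)⟩

end Helly

section LinearBound

open Finset

theorem TverbergProperty.inv_pow_le_dens {X T Y κ : Type*} {C : Set (Set X)} [Fintype T]
    [DecidableEq T] [Fintype Y] [Nonempty Y] [Fintype κ] [DecidableEq κ] [Nonempty κ]
    (hC : TverbergProperty C κ T) (y : Y → X) :
    ((Fintype.card κ : ℚ≥0) ^ Fintype.card T)⁻¹ ≤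
      ({u | ∃ q, ∀ j, q ∈ convHull C (Set.range (y ∘ u j))} : Finset (κ → T → Y)).dens := by
  set G : Finset (κ → T → Y) := {u | ∃ q, ∀ j, q ∈ convHull C (Set.range (y ∘ u j))}
  obtain ⟨z⟩ := ‹Nonempty κ›
  -- If `c` partitions the `z`-th tuple of `u`, exchanging its entry at `t` with that of the tuple
  -- numbered `c t` puts the `j`-th part inside the `j`-th tuple, so `u` is in one of
  -- `card κ ^ card T` bijective images of `G`.
  let φ (c : T → κ) : Equiv.Perm (κ → T → Y) :=
    Function.Involutive.toPerm (fun u j t => u (Equiv.swap z (c t) j) t) fun u => by simp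
  have hcover : univ ⊆ univ.biUnion fun c => G.map (φ c).toEmbedding := fun u _ => by
    obtain ⟨c, q, hq⟩ := hC fun t => y (u z t)
    have hswap : φ c u ∈ G := by
      refine mem_filter.2 ⟨mem_univ _, q, fun j => convHull_mono ?_ (hq j)⟩
      rintro _ ⟨t, rfl, rfl⟩
      exact ⟨t, by simp [φ, Function.Involutive.toPerm]⟩
    exact mem_biUnion.2 ⟨c, mem_univ c, mem_map.2 ⟨_, hswap, (φ c).left_inv u⟩⟩
  rw [inv_le_iff_one_le_mul₀' (by positivity)]
  calc 1 = (univ : Finset (κ → T → Y)).dens := dens_univ.symm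
    _ ≤ ∑ c : T → κ, (G.map (φ c).toEmbedding).dens :=
      (dens_le_dens hcover).trans dens_biUnion_le
    _ = Fintype.card κ ^ Fintype.card T * G.dens := by simp [dens_map_equiv]

theorem exists_forall_hasTverbergPartition {r : ℕ} (hr : 0 < r) :
    ∃ n : ℕ, ∀ (X : Type u) (C : Set (Set X)), RadonLE C r → ∀ k, 0 < k → ∀ Y : Finset X,
      n * k ≤ Y.card → HasTverbergPartition C k Y := by
  obtain ⟨m, hm⟩ : ∃ m, m = r ^ r ^ r := ⟨_, rfl⟩
  have hm₀ : 0 < m := hm ▸ by positivity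
  have : Nonempty (Fin m) := ⟨⟨0, hm₀⟩⟩
  let T := Fin m → Fin r
  obtain ⟨β, hβ, hfrac⟩ := exists_pos_forall_fractional_helly.{u} hr
    (α := ((m : ℚ≥0) ^ Fintype.card T)⁻¹) (by positivity)
  rw [← hm] at hfrac
  obtain ⟨n, hn⟩ := exists_nat_gt ((Fintype.card T : ℚ≥0) ^ 2 / β)
  have hn₀ : 0 < n := by
    have : (0 : ℚ≥0) < n := zero_le.trans_lt hn
    exact_mod_cast this
  refine ⟨n, fun X C hC k hk Y hY => ?_⟩
  have : Nonempty Y := (card_pos.1 ((Nat.mul_pos hn₀ hk).trans_le hY)).to_subtype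
  let F (v : T → Y) : Set X := convHull C (Set.range (Subtype.val ∘ v))
  have hdens := (hC.tverbergProperty hm₀).inv_pow_le_dens (Subtype.val : Y → X)
  rw [Fintype.card_fin] at hdens
  obtain ⟨q, hq⟩ := hfrac X C hC (T → Y) F (fun _ => convHull_min subset_rfl) hdens
  obtain ⟨v, hvq, hv⟩ := exists_pairwise_disjoint_range (k := k) (S := {v | q ∈ F v}) (by
    calc (Fintype.card T : ℚ≥0) ^ 2 * k < n * β * k := by
          gcongr
          exact (div_lt_iff₀ hβ).1 hn
      _ = β * (n * k : ℕ) := by push_cast; ring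
      _ ≤ ({v | q ∈ F v} : Finset (T → Y)).dens * Fintype.card Y := by
          rw [Fintype.card_coe]
          gcongr)
  refine .of_pairwise_disjoint hk (P := fun i => Set.range (Subtype.val ∘ v i))
    ?_ ?_ fun i => (mem_filter.1 (hvq i)).2
  · rintro i _ ⟨t, rfl⟩
    exact (v i t).2
  · intro i j hij
    simpa only [Set.range_comp] using
      (Set.disjoint_image_iff Subtype.val_injective).2 (hv hij)

end LinearBound

theorem tverberg_linear_in_k_general :
    ∃ c : ℕ → ℕ, ∀ (X : Type u) (C : Set (Set X)) (r : ℕ), RadonLE C r →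
      ∀ k, 0 < k → ∀ Y : Finset X, c r * k ≤ Y.card → HasTverbergPartition C k Y := by
  choose n hn using fun r : ℕ => exists_forall_hasTverbergPartition.{u} r.succ_pos
  exact ⟨n, fun X C r hC => hn r X C (hC.mono r.le_succ)⟩

/-- (Pálvölgyi) There is a function `c` such that every convexity space with
Radon number at most `r` has `k`-th Tverberg number at most `c r * k` for all `k ≥ 2`. -/
theorem tverberg_linear_in_k :
    ∃ c : ℕ → ℕ, ∀ (X : Type u), Nonempty X → ∀ C : Set (Set X), IsConvexitySpace C →
      ∀ r : ℕ, RadonLE C r → ∀ k : ℕ, 2 ≤ k →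
        ∀ Y : Finset X, c r * k ≤ Y.card → HasTverbergPartition C k Y := by
  obtain ⟨c, hc⟩ := tverberg_linear_in_k_general.{u}
  exact ⟨c, fun X _ C _ r hC k hk => hc X C r hC k (zero_lt_two.trans_le hk)⟩
end

section
/- For all integers m ≥ k ≥ 2 there exists a function f : ℕ → ℕ such that every finite k-uniform hypergraph H with at least one edge that has property T_k(m) satisfies χ(H) ≤ f(ω(H)); that is, the class H_k(m) is χ-bounded. -/
open scoped Classical

universe u

/-!
Call sets `W` compatible when their union is independent. Applied to edges chosen inside the
dependent unions of `m` rows of sets, `T_k(m)` says that some transversal of the rows is again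
incompatible: this is the colorful Helly property.

Ramsey's theorem with forbidden clique size `ω + 1` makes a positive proportion of all `m`-tuples of
vertices independent. Colorful Helly implies fractional Helly, because dense incompatible `m`-tuples
would provide `m` rows all of whose transversals are compatible, so a positive proportion of the
vertices, with respect to any weights, is independent. Multiplicative weights turn this into a bound
on the fractional chromatic number.

A second averaging, again through colorful Helly, shows that for independent sets `σ i` a positive
proportion of the intersections `⋂ r, σ (T r)` of bounded length lies in one independent set `τ`.
Apply this, for each vertex `v`, to the sets of a fractional coloring that contain `v`. Vertices
whose families of intersections are disjoint are bounded in number, and the sets `τ` of a maximal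
collection of them color the hypergraph.
-/

open scoped Finset

section Counting

variable {α β ι κ X : Type*}

theorem exists_subset_pairwiseDisjoint_forall_not_disjoint (t : Finset ι) {D : ι → Finset X}
    (hD : ∀ i ∈ t, (D i).Nonempty) :
    ∃ S ⊆ t, (S : Set ι).PairwiseDisjoint D ∧ ∀ i ∈ t, ∃ j ∈ S, ¬ Disjoint (D i) (D j) := by
  obtain ⟨S, hS, hmax⟩ := Finset.exists_maximal
    (s := t.powerset.filter fun S : Finset ι => (S : Set ι).PairwiseDisjoint D) ⟨∅, by simp⟩
  obtain ⟨hSt, hdisj⟩ : S ⊆ t ∧ (S : Set ι).PairwiseDisjoint D := by simpa using hS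
  refine ⟨S, hSt, hdisj, fun i hi => ?_⟩
  by_contra! hi_disj
  have hinsert : insert i S ∈ t.powerset.filter fun S : Finset ι =>
      (S : Set ι).PairwiseDisjoint D := by
    simpa [Finset.insert_subset_iff, hi, hSt] using hdisj.insert fun j hj _ => hi_disj j hj
  have hiS : i ∈ S := hmax hinsert (Finset.subset_insert i S) (Finset.mem_insert_self i S)
  exact (hD i hi).ne_empty (disjoint_self.1 (hi_disj i hiS))

theorem card_filter_comp_mem_mul_le [Fintype α] [Fintype κ] [Fintype ι] {φ : α → κ}
    (hφ : Function.Injective φ) (G : Finset (α → ι)) :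
    #{z : κ → ι | z ∘ φ ∈ G} * Fintype.card ι ^ Fintype.card α ≤
      #G * Fintype.card ι ^ Fintype.card κ := by
  rw [← Fintype.card_fun, ← Fintype.card_fun, ← Finset.card_univ, ← Finset.card_univ,
    ← Finset.card_product, ← Finset.card_product]
  -- Swapping the coordinates of `z` in the range of `φ` with those of `y` is an involution.
  refine Finset.card_le_card_of_injOn (fun p => (p.1 ∘ φ, Function.extend φ p.2 p.1))
    (fun p hp => by simpa using hp) ?_
  rintro ⟨z, y⟩ - ⟨z', y'⟩ - h
  obtain ⟨hcomp, hextend⟩ := Prod.mk.inj h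
  refine Prod.ext (funext fun x => ?_) (funext fun a => ?_)
  · by_cases hx : ∃ a, φ a = x
    · obtain ⟨a, rfl⟩ := hx
      exact congrFun hcomp a
    · simpa [Function.extend_apply' _ _ _ hx] using congrFun hextend x
  · simpa [hφ.extend_apply] using congrFun hextend (φ a)

theorem card_pow_le_card_mul_of_forall_exists_comp_mem [Fintype α] [Fintype β] [Finite κ]
    [Fintype ι] [Nonempty ι] {φ : β → α → κ} (hφ : ∀ b, Function.Injective (φ b))
    {G : Finset (α → ι)} (hG : ∀ z : κ → ι, ∃ b, z ∘ φ b ∈ G) :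
    Fintype.card ι ^ Fintype.card α ≤ Fintype.card β * #G := by
  cases nonempty_fintype κ
  have hcover : Fintype.card ι ^ Fintype.card κ ≤ ∑ b, #{z : κ → ι | z ∘ φ b ∈ G} := by
    have huniv : (Finset.univ : Finset (κ → ι)) ⊆
        Finset.univ.biUnion fun b => {z : κ → ι | z ∘ φ b ∈ G} := fun z _ => by
      simpa using hG z
    rw [← Fintype.card_fun, ← Finset.card_univ]
    exact (Finset.card_le_card huniv).trans Finset.card_biUnion_le
  refine Nat.le_of_mul_le_mul_right ?_ (pow_pos (Fintype.card_pos (α := ι)) (Fintype.card κ))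
  calc Fintype.card ι ^ Fintype.card α * Fintype.card ι ^ Fintype.card κ
      ≤ Fintype.card ι ^ Fintype.card α * ∑ b, #{z : κ → ι | z ∘ φ b ∈ G} := by gcongr
    _ = ∑ b, #{z : κ → ι | z ∘ φ b ∈ G} * Fintype.card ι ^ Fintype.card α := by
      rw [mul_comm, Finset.sum_mul]
    _ ≤ ∑ _b : β, #G * Fintype.card ι ^ Fintype.card κ :=
      Finset.sum_le_sum fun b _ => card_filter_comp_mem_mul_le (hφ b) G
    _ = Fintype.card β * #G * Fintype.card ι ^ Fintype.card κ := by
      rw [Finset.sum_const, Finset.card_univ, smul_eq_mul, mul_assoc]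

theorem half_mul_card_le_card_filter_of_mul_card_le_sum [Fintype X] {f : X → ℝ} {M δ : ℝ}
    (hM : 0 < M) (hδ : 0 ≤ δ) (hfM : ∀ x, f x ≤ M) (hf : δ * M * Fintype.card X ≤ ∑ x, f x) :
    δ / 2 * Fintype.card X ≤ #{x | δ / 2 * M ≤ f x} := by
  have hpoint : ∀ x, f x ≤ (if δ / 2 * M ≤ f x then M else 0) + δ / 2 * M := fun x => by
    split_ifs with hx
    · linarith [hfM x, mul_nonneg (half_pos hM).le hδ]
    · linarith
  have hsum := hf.trans (Finset.sum_le_sum fun x _ => hpoint x)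
  rw [Finset.sum_add_distrib, ← Finset.sum_filter, Finset.sum_const, Finset.sum_const,
    Finset.card_univ, nsmul_eq_mul, nsmul_eq_mul] at hsum
  exact le_of_mul_le_mul_right (by linarith) hM

theorem exists_mul_card_le_card_filter {R : α → β → Prop} [∀ a b, Decidable (R a b)]
    {s : Finset α} {t : Finset β} {c : ℝ} (ht : t.Nonempty)
    (h : ∀ a ∈ s, c * #t ≤ #{b ∈ t | R a b}) :
    ∃ b ∈ t, c * #s ≤ #{a ∈ s | R a b} := by
  have hdouble : ∑ a ∈ s, #{b ∈ t | R a b} = ∑ b ∈ t, #{a ∈ s | R a b} :=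
    Finset.sum_card_bipartiteAbove_eq_sum_card_bipartiteBelow R
  refine Finset.exists_le_of_sum_le ht ?_
  calc ∑ _b ∈ t, c * #s = ∑ _a ∈ s, c * #t := by
        rw [Finset.sum_const, Finset.sum_const, nsmul_eq_mul, nsmul_eq_mul]; ring
    _ ≤ ∑ a ∈ s, (#{b ∈ t | R a b} : ℝ) := Finset.sum_le_sum h
    _ = ∑ b ∈ t, (#{a ∈ s | R a b} : ℝ) := mod_cast hdouble

theorem sum_card_filter_cons_mem [Fintype ι] {r : ℕ} (G : Finset (Fin (r + 1) → ι)) :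
    ∑ z : Fin r → ι, #{x | (Fin.cons x z : Fin (r + 1) → ι) ∈ G} = #G := by
  calc ∑ z : Fin r → ι, #{x | (Fin.cons x z : Fin (r + 1) → ι) ∈ G}
      = ∑ p : ι × (Fin r → ι), if (Fin.cons p.1 p.2 : Fin (r + 1) → ι) ∈ G then 1 else 0 := by
        simp_rw [Finset.card_filter, Fintype.sum_prod_type_right]
    _ = ∑ g : Fin (r + 1) → ι, if g ∈ G then 1 else 0 :=
        (Fin.consEquiv fun _ => ι).sum_comp fun g => if g ∈ G then 1 else 0
    _ = #G := by simp

end Counting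

section Ramsey

variable {α : Type u}

/-- The Ramsey arrow relation `N → (a, b)ᵏ`, for the two-coloring of `k`-sets given by `P` and its
negation. -/
def RamseyArrow (k N a b : ℕ) : Prop :=
  ∀ (α : Type u) (S : Finset α) (P : Finset α → Prop), N ≤ #S →
    (∃ Q ⊆ S, a ≤ #Q ∧ ∀ q ∈ Q.powersetCard k, P q) ∨
      ∃ Q ⊆ S, b ≤ #Q ∧ ∀ q ∈ Q.powersetCard k, ¬ P q

theorem RamseyArrow.symm {k N a b : ℕ} (h : RamseyArrow.{u} k N a b) :
    RamseyArrow.{u} k N b a := fun α S P hS => by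
  simpa using (h α S (fun q => ¬ P q) hS).symm

theorem ramseyArrow_zero (a b : ℕ) : RamseyArrow.{u} 0 (max a b) a b := fun α S P hS => by
  by_cases hP : P ∅
  · exact Or.inl ⟨S, subset_rfl, le_of_max_le_left hS, by simpa using hP⟩
  · exact Or.inr ⟨S, subset_rfl, le_of_max_le_right hS, by simpa using hP⟩

theorem ramseyArrow_succ_zero_left (k b : ℕ) : RamseyArrow.{u} (k + 1) 0 0 b := fun α S P _ =>
  Or.inl ⟨∅, Finset.empty_subset S, le_rfl, by simp⟩

theorem RamseyArrow.exists_of_forall_insert {k N a b : ℕ} (h : RamseyArrow.{u} (k + 1) N a b)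
    {S T : Finset α} {x : α} {P : Finset α → Prop} (hx : x ∈ S) (hTS : T ⊆ S.erase x)
    (hT : N ≤ #T) (hlink : ∀ q ∈ T.powersetCard k, P (insert x q)) :
    (∃ Q ⊆ S, a + 1 ≤ #Q ∧ ∀ q ∈ Q.powersetCard (k + 1), P q) ∨
      ∃ Q ⊆ S, b ≤ #Q ∧ ∀ q ∈ Q.powersetCard (k + 1), ¬ P q := by
  refine (h α T P hT).imp ?_ ?_
  · rintro ⟨Q, hQT, ha, hQ⟩
    have hxQ : x ∉ Q := fun hxQ => Finset.notMem_erase x S (hTS (hQT hxQ))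
    refine ⟨insert x Q, ?_, ?_, ?_⟩
    · exact Finset.insert_subset hx ((hQT.trans hTS).trans (Finset.erase_subset x S))
    · simpa [Finset.card_insert_of_notMem hxQ] using ha
    · rw [Finset.powersetCard_succ_insert hxQ]
      intro q hq
      rcases Finset.mem_union.1 hq with hq | hq
      · exact hQ q hq
      · obtain ⟨q', hq', rfl⟩ := Finset.mem_image.1 hq
        exact hlink q' (Finset.powersetCard_mono hQT hq')
  · rintro ⟨Q, hQT, hb, hQ⟩
    exact ⟨Q, (hQT.trans hTS).trans (Finset.erase_subset x S), hb, hQ⟩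

theorem RamseyArrow.succ {k N N₁ N₂ a b : ℕ} (h : RamseyArrow.{u} k N N₁ N₂)
    (h₁ : RamseyArrow.{u} (k + 1) N₁ a (b + 1)) (h₂ : RamseyArrow.{u} (k + 1) N₂ (a + 1) b) :
    RamseyArrow.{u} (k + 1) (N + 1) (a + 1) (b + 1) := fun α S P hS => by
  obtain ⟨x, hx⟩ : S.Nonempty := Finset.card_pos.1 (by omega)
  have hN : N ≤ #(S.erase x) := by rw [Finset.card_erase_of_mem hx]; omega
  rcases h α (S.erase x) (fun q => P (insert x q)) hN with ⟨T, hTS, hT, hlink⟩ | ⟨T, hTS, hT, hlink⟩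
  · exact h₁.exists_of_forall_insert hx hTS hT hlink
  · have := h₂.symm.exists_of_forall_insert (P := fun q => ¬ P q) hx hTS hT hlink
    simpa using this.symm

theorem exists_ramseyArrow (k : ℕ) : ∀ a b : ℕ, ∃ N, RamseyArrow.{u} k N a b := by
  induction k with
  | zero => exact fun a b => ⟨max a b, ramseyArrow_zero a b⟩
  | succ k ihk =>
    intro a
    induction a with
    | zero => exact fun b => ⟨0, ramseyArrow_succ_zero_left k b⟩
    | succ a iha =>
      intro b
      induction b with
      | zero => exact ⟨0, (ramseyArrow_succ_zero_left k (a + 1)).symm⟩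
      | succ b ihb =>
        obtain ⟨N₁, h₁⟩ := iha (b + 1)
        obtain ⟨N₂, h₂⟩ := ihb
        obtain ⟨N, h⟩ := ihk N₁ N₂
        exact ⟨N + 1, h.succ h₁ h₂⟩

end Ramsey

section Transversals

variable {M : Type*} [Fintype M]

/-- A set `B` of `M`-tuples is `ψ`-dense down to density `β` if every set of points of density
`η ≥ β` spans a proportion at least `ψ η` of all tuples with entries from `B`. -/
def IsDenseDownTo {ι : Type*} [Fintype ι] (ψ : ℝ → ℝ) (β : ℝ) (B : Finset (M → ι)) : Prop :=
  ∀ η ≥ β, ∀ U : Finset ι, η * Fintype.card ι ≤ #U →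
    ψ η * Fintype.card ι ^ Fintype.card M ≤ #{e ∈ B | ∀ c, e c ∈ U}

theorem IsDenseDownTo.mono {ι : Type*} [Fintype ι] {ψ : ℝ → ℝ} {β β' : ℝ} {B : Finset (M → ι)}
    (h : IsDenseDownTo ψ β B) (hβ : β ≤ β') : IsDenseDownTo ψ β' B :=
  fun η hη => h η (hβ.trans hη)

theorem IsDenseDownTo.exists_mem_mul_card_le {ι X : Type*} [Fintype ι] [Nonempty ι] {ψ : ℝ → ℝ}
    {β : ℝ} {B : Finset (M → ι)} (hB : IsDenseDownTo ψ β B) (hψ : 0 < ψ β) {S : Finset X}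
    (hS : S.Nonempty) {A : X → Finset ι} (hA : ∀ z ∈ S, β * Fintype.card ι ≤ #(A z)) :
    ∃ e ∈ B, ψ β * #S ≤ #{z ∈ S | ∀ c, e c ∈ A z} := by
  have hN : (0 : ℝ) < Fintype.card ι := mod_cast Fintype.card_pos
  have hdense : ∀ z ∈ S, ψ β * Fintype.card ι ^ Fintype.card M ≤ #{e ∈ B | ∀ c, e c ∈ A z} :=
    fun z hz => hB β le_rfl (A z) (hA z hz)
  have hBne : B.Nonempty := by
    obtain ⟨z, hz⟩ := hS
    have hpos := (mul_pos hψ (pow_pos hN (Fintype.card M))).trans_le (hdense z hz)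
    exact (Finset.card_pos.1 (Nat.cast_pos.1 hpos)).mono (Finset.filter_subset _ B)
  have hBcard : (#B : ℝ) ≤ (Fintype.card ι : ℝ) ^ Fintype.card M := by
    rw [← Nat.cast_pow, ← Fintype.card_fun]
    exact mod_cast Finset.card_le_univ B
  have hcount : ∀ z ∈ S, ψ β * #B ≤ #{e ∈ B | ∀ c, e c ∈ A z} := fun z hz =>
    (mul_le_mul_of_nonneg_left hBcard hψ.le).trans (hdense z hz)
  exact exists_mul_card_le_card_filter hBne hcount

theorem IsDenseDownTo.exists_mem_mul_pow_le_card {ι : Type*} [Fintype ι] [Nonempty ι] {ψ : ℝ → ℝ}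
    {δ : ℝ} {B : Finset (M → ι)} (hB : IsDenseDownTo ψ (δ / 2) B) (hδ : 0 < δ)
    (hψ : 0 < ψ (δ / 2)) {r : ℕ} {G : Finset (Fin (r + 1) → ι)}
    (hG : δ * Fintype.card ι ^ (r + 1) ≤ #G) :
    ∃ e ∈ B, ψ (δ / 2) * (δ / 2) * Fintype.card ι ^ r ≤
      #{z : Fin r → ι | ∀ c, (Fin.cons (e c) z : Fin (r + 1) → ι) ∈ G} := by
  have hN : (0 : ℝ) < Fintype.card ι := mod_cast Fintype.card_pos
  let A (z : Fin r → ι) : Finset ι := {x | (Fin.cons x z : Fin (r + 1) → ι) ∈ G}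
  let S : Finset (Fin r → ι) := {z | δ / 2 * Fintype.card ι ≤ #(A z)}
  have hS : δ / 2 * Fintype.card ι ^ r ≤ #S := by
    have hsum : δ * Fintype.card ι * Fintype.card (Fin r → ι) ≤ ∑ z, (#(A z) : ℝ) := by
      rw [← Nat.cast_sum, sum_card_filter_cons_mem, Fintype.card_fun, Fintype.card_fin]
      push_cast
      rwa [mul_assoc, ← pow_succ']
    have hhalf := half_mul_card_le_card_filter_of_mul_card_le_sum hN hδ.le
      (fun z => Nat.cast_le.2 (Finset.card_le_univ (A z))) hsum
    rwa [Fintype.card_fun, Fintype.card_fin, Nat.cast_pow] at hhalf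
  have hSne : S.Nonempty := Finset.card_pos.1 <| Nat.cast_pos.1 <|
    (by positivity : 0 < δ / 2 * (Fintype.card ι : ℝ) ^ r).trans_le hS
  obtain ⟨e, he, hcard⟩ := hB.exists_mem_mul_card_le hψ hSne (A := A)
    fun z hz => (Finset.mem_filter.1 hz).2
  refine ⟨e, he, ?_⟩
  calc ψ (δ / 2) * (δ / 2) * Fintype.card ι ^ r
      = ψ (δ / 2) * (δ / 2 * Fintype.card ι ^ r) := mul_assoc ..
    _ ≤ ψ (δ / 2) * #S := by gcongr
    _ ≤ #{z ∈ S | ∀ c, e c ∈ A z} := hcard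
    _ ≤ #{z : Fin r → ι | ∀ c, (Fin.cons (e c) z : Fin (r + 1) → ι) ∈ G} :=
      Nat.cast_le.2 <| Finset.card_le_card fun z hz => Finset.mem_filter.2
        ⟨Finset.mem_univ z, fun c => (Finset.mem_filter.1 ((Finset.mem_filter.1 hz).2 c)).2⟩

theorem exists_rows_forall_transversal_mem {ψ : ℝ → ℝ} (hψ : ∀ η > 0, 0 < ψ η) (r : ℕ) :
    ∀ δ : ℝ, 0 < δ → ∃ β ∈ Set.Ioc (0 : ℝ) 1, ∀ (ι : Type*) [Fintype ι] [Nonempty ι]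
      (B : Finset (M → ι)), IsDenseDownTo ψ β B →
      ∀ G : Finset (Fin r → ι), δ * Fintype.card ι ^ r ≤ #G →
        ∃ e : Fin r → M → ι, (∀ a, e a ∈ B) ∧ ∀ f : Fin r → M, (fun a => e a (f a)) ∈ G := by
  induction r with
  | zero =>
    refine fun δ hδ => ⟨1, by simp, fun ι _ _ B _ G hG => ?_⟩
    have hpos : (0 : ℝ) < #G := hδ.trans_le (by simpa using hG)
    obtain ⟨g, hg⟩ : G.Nonempty := Finset.card_pos.1 (Nat.cast_pos.1 hpos)
    exact ⟨Fin.elim0, fun a => a.elim0, fun f => by rwa [Subsingleton.elim (fun a => _) g]⟩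
  | succ r ih =>
    intro δ hδ
    have hψδ : 0 < ψ (δ / 2) := hψ _ (half_pos hδ)
    obtain ⟨β, ⟨hβ0, hβ1⟩, hβ⟩ := ih (ψ (δ / 2) * (δ / 2)) (by positivity)
    refine ⟨min β (δ / 2), ⟨lt_min hβ0 (half_pos hδ), (min_le_left _ _).trans hβ1⟩, ?_⟩
    intro ι _ _ B hB G hG
    obtain ⟨e₀, he₀, hG'⟩ :=
      (hB.mono (min_le_right β (δ / 2))).exists_mem_mul_pow_le_card hδ hψδ hG
    obtain ⟨e, he, hf⟩ := hβ ι B (hB.mono (min_le_left β (δ / 2))) _ hG'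
    refine ⟨Fin.cons e₀ e, Fin.cases he₀ he, fun f => ?_⟩
    have hcons : (fun a => (Fin.cons e₀ e : Fin (r + 1) → M → ι) a (f a)) =
        Fin.cons (e₀ (f 0)) fun a => e a (f a.succ) :=
      funext (Fin.cases rfl fun _ => rfl)
    rw [hcons]
    exact (Finset.mem_filter.1 (hf fun a => f a.succ)).2 (f 0)

end Transversals

section ColorfulHelly

variable {V ι : Type*} {E : Finset (Finset V)} {m : ℕ}

theorem not_isIndep_iff {I : Set V} : ¬ IsIndep E I ↔ ∃ e ∈ E, (e : Set V) ⊆ I := by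
  simp [IsIndep]

theorem IsIndep.mono {I J : Set V} (hJ : IsIndep E J) (hIJ : I ⊆ J) : IsIndep E I :=
  fun e he heI => hJ e he (heI.trans hIJ)

/-- The colorful Helly property with `m` colors for the convexity space associated with `E`. Its
points are the independent sets and its convex sets are `{I | W ⊆ I}` for `W ⊆ V`, so a family of
them has a common point exactly when the union of the corresponding `W` is independent. -/
def ColorfulHelly (E : Finset (Finset V)) (m : ℕ) : Prop :=
  ∀ A : Fin m → Fin m → Set V, (∀ a, ¬ IsIndep E (⋃ c, A a c)) →
    ∃ f : Fin m → Fin m, ¬ IsIndep E (⋃ a, A a (f a))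

theorem PropT.colorfulHelly [DecidableEq V] {k : ℕ} (hT : PropT E k m) : ColorfulHelly E m := by
  intro A hA
  choose e he heA using fun a => not_isIndep_iff.1 (hA a)
  obtain ⟨g, v, hg, -, hv, hedge⟩ := hT e he
  choose c hc using fun j => Set.mem_iUnion.1 (heA (g j) (hv j))
  refine ⟨Function.extend g c id, not_isIndep_iff.2 ⟨_, hedge, fun x hx => ?_⟩⟩
  obtain ⟨j, -, rfl⟩ := Finset.mem_image.1 hx
  refine Set.mem_iUnion.2 ⟨g j, ?_⟩
  rw [hg.injective.extend_apply]
  exact hc j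

theorem exists_tuple_not_isIndep (hE : ∀ e ∈ E, e.Nonempty ∧ #e ≤ m) {W : ι → Set V}
    {J : Finset ι} (hJ : ¬ IsIndep E (⋃ i ∈ J, W i)) :
    ∃ e : Fin m → ι, (∀ a, e a ∈ J) ∧ ¬ IsIndep E (⋃ a, W (e a)) := by
  obtain ⟨d, hd, hdJ⟩ := not_isIndep_iff.1 hJ
  have hd_nonempty : Nonempty d := (hE d hd).1.to_subtype
  obtain ⟨φ⟩ : Nonempty (d ↪ Fin m) :=
    Function.Embedding.nonempty_of_card_le (by simpa using (hE d hd).2)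
  choose i hiJ hi using fun x : d => Set.mem_iUnion₂.1 (hdJ x.2)
  refine ⟨i ∘ Function.invFun φ, fun a => hiJ _, not_isIndep_iff.2 ⟨d, hd, fun x hx => ?_⟩⟩
  refine Set.mem_iUnion.2 ⟨φ ⟨x, hx⟩, ?_⟩
  simpa [Function.leftInverse_invFun φ.injective _] using hi ⟨x, hx⟩

theorem exists_pairwiseDisjoint_tuples_not_isIndep [Finite ι] [NeZero m]
    (hE : ∀ e ∈ E, e.Nonempty ∧ #e ≤ m) {W : ι → Set V} {b : ℝ}
    (hb : ∀ J : Finset ι, IsIndep E (⋃ i ∈ J, W i) → #J ≤ b) (U : Finset ι) :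
    ∃ S : Finset (Fin m → ι), (∀ e ∈ S, (∀ a, e a ∈ U) ∧ ¬ IsIndep E (⋃ a, W (e a))) ∧
      (S : Set (Fin m → ι)).PairwiseDisjoint (fun e => Finset.univ.image e) ∧ #U ≤ b + #S * m := by
  cases nonempty_fintype ι
  obtain ⟨S, hSt, hdisj, hmax⟩ := exists_subset_pairwiseDisjoint_forall_not_disjoint
    {e : Fin m → ι | (∀ a, e a ∈ U) ∧ ¬ IsIndep E (⋃ a, W (e a))}
    (D := fun e => Finset.univ.image e) fun e _ => Finset.univ_nonempty.image e
  refine ⟨S, fun e he => by simpa using hSt he, hdisj, ?_⟩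
  let K : Finset ι := S.biUnion fun e => Finset.univ.image e
  have hK : #K ≤ #S * m := Finset.card_biUnion_le_card_mul _ _ _ fun e _ =>
    Finset.card_image_le.trans_eq (Finset.card_fin m)
  have hindep : IsIndep E (⋃ i ∈ U \ K, W i) := by
    by_contra hdep
    obtain ⟨e, heJ, he⟩ := exists_tuple_not_isIndep hE hdep
    obtain ⟨j, hj, hmeet⟩ := hmax e (by simpa [he] using fun a => (Finset.mem_sdiff.1 (heJ a)).1)
    obtain ⟨x, hxe, hxj⟩ := Finset.not_disjoint_iff.1 hmeet
    obtain ⟨a, -, rfl⟩ := Finset.mem_image.1 hxe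
    exact (Finset.mem_sdiff.1 (heJ a)).2 (Finset.mem_biUnion.2 ⟨j, hj, hxj⟩)
  calc (#U : ℝ) ≤ #(U \ K) + #K := mod_cast Finset.card_le_card_sdiff_add_card
    _ ≤ b + #S * m := add_le_add (hb _ hindep) (mod_cast hK)

theorem ColorfulHelly.card_pow_le_card_not_isIndep (hC : ColorfulHelly E m) [Fintype ι]
    {W : ι → Set V} {U : Finset ι} {S : Finset (Fin m → ι)}
    (hS : ∀ e ∈ S, (∀ a, e a ∈ U) ∧ ¬ IsIndep E (⋃ a, W (e a)))
    (hdisj : (S : Set (Fin m → ι)).PairwiseDisjoint fun e => Finset.univ.image e) :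
    #S ^ m ≤ #{e : Fin m → ι | ¬ IsIndep E (⋃ a, W (e a)) ∧ ∀ a, e a ∈ U} := by
  have htransversal : ∀ T : Fin m → S, ∃ f : Fin m → Fin m,
      ¬ IsIndep E (⋃ a, W ((T a : Fin m → ι) (f a))) := fun T =>
    hC (fun a c => W ((T a : Fin m → ι) c)) fun a => (hS _ (T a).2).2
  choose f hf using htransversal
  calc #S ^ m = #(Finset.univ : Finset (Fin m → S)) := by simp
    _ ≤ _ := Finset.card_le_card_of_injOn (fun T a => (T a : Fin m → ι) (f T a)) ?_ ?_
  · intro T _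
    simpa using ⟨hf T, fun a => (hS _ (T a).2).1 _⟩
  · intro T _ T' _ h
    refine funext fun a => Subtype.ext (hdisj.elim_finset (T a).2 (T' a).2 _
      (Finset.mem_image_of_mem _ (Finset.mem_univ (f T a))) ?_)
    rw [show (T a : Fin m → ι) (f T a) = (T' a : Fin m → ι) (f T' a) from congrFun h a]
    exact Finset.mem_image_of_mem _ (Finset.mem_univ _)

theorem ColorfulHelly.isDenseDownTo [NeZero m] (hC : ColorfulHelly E m)
    (hE : ∀ e ∈ E, e.Nonempty ∧ #e ≤ m) [Fintype ι] {W : ι → Set V} {β : ℝ} (hβ : 0 ≤ β)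
    (hb : ∀ J : Finset ι, IsIndep E (⋃ i ∈ J, W i) → #J ≤ β / 2 * Fintype.card ι) :
    IsDenseDownTo (fun η => (η / (2 * m)) ^ m) β
      {e : Fin m → ι | ¬ IsIndep E (⋃ a, W (e a))} := by
  intro η hη U hU
  obtain ⟨S, hS, hdisj, hcard⟩ := exists_pairwiseDisjoint_tuples_not_isIndep hE hb U
  have hm : (0 : ℝ) < m := mod_cast NeZero.pos m
  have hη_nonneg : 0 ≤ η := hβ.trans hη
  have hSlarge : η / (2 * m) * Fintype.card ι ≤ #S := by
    have hβη : β * Fintype.card ι ≤ η * Fintype.card ι := by gcongr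
    rw [div_mul_eq_mul_div, div_le_iff₀ (by positivity)]
    linarith
  calc (η / (2 * m)) ^ m * (Fintype.card ι : ℝ) ^ Fintype.card (Fin m)
      = (η / (2 * m) * Fintype.card ι) ^ m := by rw [Fintype.card_fin, mul_pow]
    _ ≤ (#S : ℝ) ^ m := by gcongr
    _ ≤ _ := by
      rw [Finset.filter_filter, ← Nat.cast_pow, Nat.cast_le]
      convert hC.card_pow_le_card_not_isIndep hS hdisj

theorem exists_fractionalHelly (m : ℕ) [NeZero m] {δ : ℝ} (hδ : 0 < δ) :
    ∃ β ∈ Set.Ioc (0 : ℝ) 1, ∀ (V : Type*) (E : Finset (Finset V)),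
      (∀ e ∈ E, e.Nonempty ∧ #e ≤ m) → ColorfulHelly E m →
      ∀ (ι : Type*) [Fintype ι] [Nonempty ι] (W : ι → Set V),
        δ * Fintype.card ι ^ m ≤ #{e : Fin m → ι | IsIndep E (⋃ a, W (e a))} →
        ∃ J : Finset ι, β * Fintype.card ι ≤ #J ∧ IsIndep E (⋃ i ∈ J, W i) := by
  have hm : (0 : ℝ) < m := mod_cast NeZero.pos m
  obtain ⟨β, ⟨hβ0, hβ1⟩, hrows⟩ := exists_rows_forall_transversal_mem (M := Fin m)
    (ψ := fun η => (η / (2 * m)) ^ m) (fun η hη => by positivity) m δ hδ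
  refine ⟨β / 2, ⟨half_pos hβ0, (half_le_self hβ0.le).trans hβ1⟩, ?_⟩
  intro V E hE hC ι _ _ W hG
  by_contra! hsmall
  have hdense := hC.isDenseDownTo hE hβ0.le fun J hJ =>
    le_of_not_gt fun hlt => hsmall J hlt.le hJ
  obtain ⟨e, he, hindep⟩ := hrows ι _ hdense _ hG
  obtain ⟨f, hf⟩ := hC (fun a c => W (e a c)) fun a => (Finset.mem_filter.1 (he a)).2
  exact hf (Finset.mem_filter.1 (hindep f)).2

end ColorfulHelly

section CliqueNumber

variable {V ι : Type*} {E : Finset (Finset V)} {k m w : ℕ}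

theorem nonempty_and_card_le_of_card_eq (hE : ∀ e ∈ E, #e = k) (hk : 0 < k) (hkm : k ≤ m) :
    ∀ e ∈ E, e.Nonempty ∧ #e ≤ m := fun e he =>
  ⟨Finset.card_pos.1 (hk.trans_eq (hE e he).symm), (hE e he).trans_le hkm⟩

theorem CliqueNumLE.card_le_of_forall_image_mem [DecidableEq V] (hω : CliqueNumLE E k w)
    (hE : ∀ e ∈ E, #e = k) (hk : 2 ≤ k) {f : ι → V} {Q : Finset ι} (hkQ : k ≤ #Q)
    (hQ : ∀ q ∈ Q.powersetCard k, q.image f ∈ E) : #Q ≤ w := by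
  have hinj : Set.InjOn f Q := by
    intro i hi j hj hij
    obtain ⟨q, hijq, hqQ, hq⟩ := Finset.exists_subsuperset_card_eq (s := {i, j}) (t := Q)
      (Finset.insert_subset hi (Finset.singleton_subset_iff.2 hj)) (Finset.card_le_two.trans hk) hkQ
    have hq_image : #(q.image f) = #q :=
      (hE _ (hQ q (Finset.mem_powersetCard.2 ⟨hqQ, hq⟩))).trans hq.symm
    exact Finset.card_image_iff.1 hq_image (hijq (by simp)) (hijq (by simp)) hij
  rw [← Finset.card_image_of_injOn hinj]
  refine hω _ fun e he hcard => ?_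
  obtain ⟨q, hqQ, rfl⟩ := Finset.subset_image_iff.1 he
  rw [Finset.card_image_of_injOn (hinj.mono (Finset.coe_subset.2 hqQ))] at hcard
  exact hQ q (Finset.mem_powersetCard.2 ⟨hqQ, hcard⟩)

theorem isIndep_image_of_forall_image_notMem [DecidableEq V] (hE : ∀ e ∈ E, #e = k) {f : ι → V}
    {Q : Finset ι} (hQ : ∀ q ∈ Q.powersetCard k, q.image f ∉ E) : IsIndep E (f '' Q) := by
  intro e he heQ
  have hsurj : Set.SurjOn f Q e := heQ
  obtain ⟨q, hqQ, hinj, rfl⟩ := Finset.exists_subset_injOn_image_eq_of_surjOn (Q : Set ι) e hsurj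
  refine hQ q (Finset.mem_powersetCard.2 ⟨Finset.coe_subset.1 hqQ, ?_⟩) he
  rw [← hE _ he, Finset.card_image_of_injOn hinj]

theorem exists_forall_exists_embedding_isIndep (hk : 2 ≤ k) (m w : ℕ) :
    ∃ R : ℕ, ∀ (V : Type*) (E : Finset (Finset V)), (∀ e ∈ E, #e = k) → CliqueNumLE E k w →
      ∀ f : Fin R → V, ∃ φ : Fin m ↪ Fin R, IsIndep E (Set.range (f ∘ φ)) := by
  obtain ⟨R, hR⟩ := exists_ramseyArrow k (max (w + 1) k) m
  refine ⟨R, fun V E hE hω f => ?_⟩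
  rcases hR (Fin R) Finset.univ (fun q => q.image f ∈ E) (by simp) with
    ⟨Q, -, hcard, hQ⟩ | ⟨Q, -, hcard, hQ⟩
  · have hQw : #Q ≤ w := hω.card_le_of_forall_image_mem hE hk (le_of_max_le_right hcard) hQ
    exact absurd (le_of_max_le_left hcard) (by omega)
  · refine ⟨(Q.orderEmbOfCardLe hcard).toEmbedding,
      (isIndep_image_of_forall_image_notMem hE hQ).mono ?_⟩
    rintro _ ⟨a, rfl⟩
    exact Set.mem_image_of_mem f (Q.orderEmbOfCardLe_mem hcard a)

theorem exists_mul_pow_le_card_isIndep (hk : 2 ≤ k) (m w : ℕ) :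
    ∃ δ > (0 : ℝ), ∀ (V : Type*) (E : Finset (Finset V)), (∀ e ∈ E, #e = k) →
      CliqueNumLE E k w → ∀ (ι : Type*) [Fintype ι] [Nonempty ι] (g : ι → V),
        δ * Fintype.card ι ^ m ≤ #{y : Fin m → ι | IsIndep E (⋃ a, {g (y a)})} := by
  obtain ⟨R, hR⟩ := exists_forall_exists_embedding_isIndep hk m w
  refine ⟨1 / (Fintype.card (Fin m ↪ Fin R) + 1), by positivity, fun V E hE hω ι _ _ g => ?_⟩
  have hcount := card_pow_le_card_mul_of_forall_exists_comp_mem (ι := ι)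
    (φ := fun φ : Fin m ↪ Fin R => (φ : Fin m → Fin R)) (fun φ => φ.injective)
    (G := {y | IsIndep E (⋃ a, {g (y a)})}) fun z => by
      simpa [Set.iUnion_singleton_eq_range, Function.comp_def] using hR V E hE hω (g ∘ z)
  rw [one_div_mul_eq_div, div_le_iff₀ (by positivity)]
  rw [Fintype.card_fin] at hcount
  calc (Fintype.card ι : ℝ) ^ m
      ≤ Fintype.card (Fin m ↪ Fin R) * #{y : Fin m → ι | IsIndep E (⋃ a, {g (y a)})} :=
        mod_cast hcount
    _ ≤ _ := by rw [mul_comm]; gcongr; exact le_add_of_nonneg_right zero_le_one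

theorem exists_mul_sum_le_sum_isIndep (hk : 2 ≤ k) (hkm : k ≤ m) (w : ℕ) :
    ∃ β ∈ Set.Ioc (0 : ℝ) 1, ∀ (V : Type*) [Fintype V] (E : Finset (Finset V)),
      (∀ e ∈ E, #e = k) → ColorfulHelly E m → CliqueNumLE E k w → ∀ wt : V → ℕ,
        ∃ I : Finset V, IsIndep E I ∧ β * ∑ v, (wt v : ℝ) ≤ ∑ v ∈ I, (wt v : ℝ) := by
  have : NeZero m := ⟨by omega⟩
  obtain ⟨δ, hδ, hdense⟩ := exists_mul_pow_le_card_isIndep hk m w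
  obtain ⟨β, hβ, hfrac⟩ := exists_fractionalHelly m hδ
  refine ⟨β, hβ, fun V _ E hE hC hω wt => ?_⟩
  have hsize := nonempty_and_card_le_of_card_eq hE (by omega) hkm
  have hcard : Fintype.card (Σ v, Fin (wt v)) = ∑ v, wt v := by simp
  rcases isEmpty_or_nonempty (Σ v, Fin (wt v)) with hempty | hne
  · refine ⟨∅, fun e he hsub => (hsize e he).1.ne_empty (by simpa using hsub), ?_⟩
    rw [← Nat.cast_sum, ← hcard, Fintype.card_eq_zero]
    simp
  obtain ⟨J, hJ, hindep⟩ := hfrac V E hsize hC (Σ v, Fin (wt v)) (fun i => {i.1})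
    (hdense V E hE hω _ Sigma.fst)
  refine ⟨J.image Sigma.fst, hindep.mono fun v hv => by simpa using hv, ?_⟩
  have hJcard : #J ≤ ∑ v ∈ J.image Sigma.fst, wt v := by
    calc #J ≤ #((J.image Sigma.fst).sigma fun v => (Finset.univ : Finset (Fin (wt v)))) :=
          Finset.card_le_card fun i hi => by simpa using ⟨i.2, hi⟩
      _ = _ := by simp
  rw [hcard] at hJ
  exact_mod_cast hJ.trans (Nat.cast_le.2 hJcard)

end CliqueNumber

section FractionalColoring

variable {V : Type*} {E : Finset (Finset V)} {β : ℝ}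

/-- The fractional chromatic number of `E` is at most `p`: some `p * s` independent sets cover each
vertex at least `s` times. -/
def FracChromaticLE (E : Finset (Finset V)) (p : ℕ) : Prop :=
  ∃ s > 0, ∃ σ : Fin (p * s) → Set V,
    (∀ i, IsIndep E (σ i)) ∧ ∀ v, s ≤ #{i | v ∈ σ i}

-- Multiplicative weights: the weight of a vertex doubles each time the chosen set misses it.
theorem exists_isIndep_sum_two_pow_le [Fintype V] (hβ : β ≤ 2)
    (hI : ∀ wt : V → ℕ, ∃ I : Finset V,
      IsIndep E I ∧ β * ∑ v, (wt v : ℝ) ≤ ∑ v ∈ I, (wt v : ℝ)) (n : ℕ) :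
    ∃ σ : Fin n → Set V, (∀ i, IsIndep E (σ i)) ∧
      ∑ v, (2 : ℝ) ^ #{i | v ∉ σ i} ≤ Fintype.card V * (2 - β) ^ n := by
  induction n with
  | zero => exact ⟨Fin.elim0, fun i => i.elim0, by simp⟩
  | succ n ih =>
    obtain ⟨σ, hσ, hsum⟩ := ih
    let wt (v : V) : ℕ := 2 ^ #{i | v ∉ σ i}
    obtain ⟨I, hI_indep, hwt⟩ := hI wt
    have hstep : ∀ v, (2 : ℝ) ^ #{i | v ∉ (Fin.cons ↑I σ : Fin (n + 1) → Set V) i} =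
        2 * wt v - if v ∈ I then (wt v : ℝ) else 0 := fun v => by
      rw [Fin.card_filter_univ_succ]
      by_cases hv : v ∈ I
      · simp [hv, wt]; ring
      · simp [hv, wt, pow_succ]; ring
    refine ⟨Fin.cons ↑I σ, Fin.cases hI_indep hσ, ?_⟩
    calc ∑ v, (2 : ℝ) ^ #{i | v ∉ (Fin.cons ↑I σ : Fin (n + 1) → Set V) i}
        = 2 * ∑ v, (wt v : ℝ) - ∑ v ∈ I, (wt v : ℝ) := by
          simp only [hstep, Finset.sum_sub_distrib, Finset.mul_sum, Finset.sum_ite_mem,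
            Finset.univ_inter]
      _ ≤ (2 - β) * ∑ v, (wt v : ℝ) := by linarith
      _ ≤ (2 - β) * (Fintype.card V * (2 - β) ^ n) := by
          gcongr
          simpa [wt] using hsum
      _ = Fintype.card V * (2 - β) ^ (n + 1) := by ring

theorem exists_forall_pow_mul_four_pow_le (hβ0 : 0 < β) (hβ2 : β ≤ 2) :
    ∃ p : ℕ, ∀ s : ℕ, (2 - β) ^ (p * s) * 4 ^ s ≤ 2 ^ (p * s) := by
  obtain ⟨p, hp⟩ := exists_pow_lt_of_lt_one (by norm_num : (0 : ℝ) < 1 / 4)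
    (by linarith : 1 - β / 2 < 1)
  have hbase : (2 - β) ^ p * 4 ≤ 2 ^ p := by
    have hscale : (2 - β) ^ p = (1 - β / 2) ^ p * 2 ^ p := by rw [← mul_pow]; ring
    nlinarith [pow_pos (zero_lt_two (α := ℝ)) p]
  refine ⟨p, fun s => ?_⟩
  rw [pow_mul, pow_mul, ← mul_pow]
  exact pow_le_pow_left₀ (mul_nonneg (pow_nonneg (by linarith) p) zero_le_four) hbase s

theorem exists_fracChromaticLE (hβ0 : 0 < β) (hβ2 : β ≤ 2) :
    ∃ p : ℕ, ∀ (V : Type*) [Fintype V] (E : Finset (Finset V)),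
      (∀ wt : V → ℕ, ∃ I : Finset V,
        IsIndep E I ∧ β * ∑ v, (wt v : ℝ) ≤ ∑ v ∈ I, (wt v : ℝ)) → FracChromaticLE E p := by
  obtain ⟨p, hp⟩ := exists_forall_pow_mul_four_pow_le hβ0 hβ2
  refine ⟨p, fun V _ E hI => ?_⟩
  let s := Fintype.card V + 1
  obtain ⟨σ, hσ, hsum⟩ := exists_isIndep_sum_two_pow_le hβ2 hI (p * s)
  refine ⟨s, Nat.succ_pos _, σ, hσ, fun v => ?_⟩
  by_contra! hv
  have hmiss : p * s ≤ #{i | v ∉ σ i} + s := by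
    have hsplit := Finset.card_filter_add_card_filter_not (s := Finset.univ) fun i => v ∈ σ i
    rw [Finset.card_fin] at hsplit
    omega
  have hpow : (2 : ℝ) ^ s * 2 ^ (p * s) ≤ Fintype.card V * 2 ^ (p * s) := by
    calc (2 : ℝ) ^ s * 2 ^ (p * s) ≤ 2 ^ s * 2 ^ (#{i | v ∉ σ i} + s) := by
          gcongr
          exact one_le_two
      _ = 2 ^ #{i | v ∉ σ i} * 4 ^ s := by
        rw [pow_add, show (4 : ℝ) = 2 * 2 by norm_num, mul_pow]; ring
      _ ≤ Fintype.card V * (2 - β) ^ (p * s) * 4 ^ s := by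
        gcongr
        exact (Finset.single_le_sum (f := fun v => (2 : ℝ) ^ #{i | v ∉ σ i})
          (fun _ _ => by positivity) (Finset.mem_univ v)).trans hsum
      _ ≤ Fintype.card V * 2 ^ (p * s) := by
        rw [mul_assoc]
        gcongr
        exact hp s
  have hcard : 2 ^ s ≤ Fintype.card V := by
    exact_mod_cast le_of_mul_le_mul_right hpow (by positivity)
  exact absurd (s.lt_two_pow_self.trans_le hcard) (by omega)

end FractionalColoring

section Selection

variable {V Y : Type*} {E : Finset (Finset V)} {m : ℕ}

theorem injective_update_apply {α γ : Type*} [DecidableEq α] (a : α) :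
    Function.Injective fun p : γ × (α → γ) => (Function.update p.2 a p.1, p.2 a) := by
  rintro ⟨c, r⟩ ⟨c', r'⟩ h
  obtain ⟨hupdate, ha⟩ := Prod.mk.inj h
  refine Prod.ext (by simpa using congrFun hupdate a) (funext fun x => ?_)
  rcases eq_or_ne x a with rfl | hx
  · exact ha
  · simpa [hx] using congrFun hupdate x

-- For a transversal `f`, the index `r = update f a 0` gives `(update r a (f a), r a) = (f, 0)` for
-- every `a`, so the `m` intersections selected by `f` all lie in `σ (z (f, 0))`.
theorem ColorfulHelly.exists_isIndep_iUnion_iInter_update [NeZero m] (hC : ColorfulHelly E m)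
    {σ : Y → Set V} (hσ : ∀ i, IsIndep E (σ i)) (z : (Fin m → Fin m) × Fin m → Y) :
    ∃ a, IsIndep E (⋃ c, ⋂ r : Fin m → Fin m, σ (z (Function.update r a c, r a))) := by
  by_contra! hdep
  obtain ⟨f, hf⟩ := hC _ hdep
  refine hf ((hσ (z (f, 0))).mono (Set.iUnion_subset fun a => ?_))
  exact (Set.iInter_subset _ (Function.update f a 0)).trans_eq (by simp)

theorem ColorfulHelly.card_pow_le_mul_card_isIndep [NeZero m] (hC : ColorfulHelly E m) [Fintype Y]
    [Nonempty Y] {σ : Y → Set V} (hσ : ∀ i, IsIndep E (σ i)) :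
    Fintype.card ((Fin m → Fin m) → Y) ^ m ≤
      m * #{T : Fin m → (Fin m → Fin m) → Y | IsIndep E (⋃ c, ⋂ r, σ (T c r))} := by
  let e := Equiv.curry (Fin m) (Fin m → Fin m) Y
  have hcount := card_pow_le_card_mul_of_forall_exists_comp_mem (ι := Y)
    (φ := fun (a : Fin m) (p : Fin m × (Fin m → Fin m)) => (Function.update p.2 a p.1, p.2 a))
    injective_update_apply
    (G := Finset.map e.symm.toEmbedding {T | IsIndep E (⋃ c, ⋂ r, σ (T c r))}) fun z => by
      simpa [e] using hC.exists_isIndep_iUnion_iInter_update hσ z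
  simpa [← pow_mul, mul_comm] using hcount

theorem exists_selection (m : ℕ) [NeZero m] :
    ∃ β > (0 : ℝ), ∀ (V : Type*) (E : Finset (Finset V)), (∀ e ∈ E, e.Nonempty ∧ #e ≤ m) →
      ColorfulHelly E m → ∀ (Y : Type*) [Fintype Y] [Nonempty Y] (σ : Y → Set V),
        (∀ i, IsIndep E (σ i)) → ∃ τ, IsIndep E τ ∧
          β * Fintype.card Y ^ Fintype.card (Fin m → Fin m) ≤
            #{T : (Fin m → Fin m) → Y | ⋂ r, σ (T r) ⊆ τ} := by
  have hm : (0 : ℝ) < m := mod_cast NeZero.pos m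
  obtain ⟨β, ⟨hβ, -⟩, hfrac⟩ := exists_fractionalHelly m (one_div_pos.2 hm)
  refine ⟨β, hβ, fun V E hE hC Y _ _ σ hσ => ?_⟩
  obtain ⟨J, hJ, hindep⟩ := hfrac V E hE hC ((Fin m → Fin m) → Y) (fun T => ⋂ r, σ (T r)) (by
    rw [one_div_mul_eq_div, div_le_iff₀' hm]
    exact mod_cast hC.card_pow_le_mul_card_isIndep hσ)
  refine ⟨_, hindep, ?_⟩
  rw [Fintype.card_fun, Nat.cast_pow] at hJ
  refine hJ.trans (Nat.cast_le.2 (Finset.card_le_card fun T hT => ?_))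
  have hsub := Set.subset_iUnion₂ (s := fun T (_ : T ∈ J) => ⋂ r, σ (T r)) T hT
  exact Finset.mem_filter.2 ⟨Finset.mem_univ T, hsub⟩

end Selection

section Coloring

variable {V ι X : Type*} {E : Finset (Finset V)} {n : ℕ}

theorem chromaticLE_of_cover [Fintype ι] (hn : Fintype.card ι ≤ n) {τ : ι → Set V}
    (hτ : ∀ i, IsIndep E (τ i)) (hcover : ∀ v, ∃ i, v ∈ τ i) : ChromaticLE E n := by
  obtain ⟨φ⟩ : Nonempty (ι ↪ Fin n) := Function.Embedding.nonempty_of_card_le (by simpa using hn)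
  choose c hc using hcover
  refine ⟨fun j => {v | φ (c v) = j}, fun v => ⟨φ (c v), rfl, fun j hj => hj.symm⟩, ?_⟩
  rintro _ ⟨v, rfl⟩
  exact (hτ (c v)).mono fun u (hu : φ (c u) = φ (c v)) => φ.injective hu ▸ hc u

-- A maximal set of vertices with disjoint `{T | v ∈ W T ∧ W T ⊆ τ v}` indexes the colors.
theorem chromaticLE_of_forall_le_card [Finite V] [Fintype X] {W : X → Set V} {b : ℝ} (hb : 0 < b)
    (hn : Fintype.card X ≤ n * b)
    (h : ∀ v, ∃ τ, IsIndep E τ ∧ b ≤ #{T | v ∈ W T ∧ W T ⊆ τ}) : ChromaticLE E n := by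
  cases nonempty_fintype V
  choose τ hτ hcard using h
  let D (v : V) : Finset X := {T | v ∈ W T ∧ W T ⊆ τ v}
  have hD : ∀ v, (D v).Nonempty := fun v =>
    Finset.card_pos.1 (Nat.cast_pos.1 (hb.trans_le (hcard v)))
  obtain ⟨S, -, hdisj, hmax⟩ := exists_subset_pairwiseDisjoint_forall_not_disjoint
    Finset.univ fun v _ => hD v
  have hS : #S * b ≤ n * b := by
    calc #S * b = ∑ _v ∈ S, b := by rw [Finset.sum_const, nsmul_eq_mul]
      _ ≤ ∑ v ∈ S, (#(D v) : ℝ) := Finset.sum_le_sum fun v _ => hcard v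
      _ = #(S.biUnion D) := by rw [Finset.card_biUnion hdisj, Nat.cast_sum]
      _ ≤ Fintype.card X := Nat.cast_le.2 (Finset.card_le_univ _)
      _ ≤ n * b := hn
  refine chromaticLE_of_cover (τ := fun u : S => τ u) ?_ (fun u => hτ u) fun v => ?_
  · rw [Fintype.card_coe]
    exact_mod_cast le_of_mul_le_mul_right hS hb
  · obtain ⟨u, hu, hmeet⟩ := hmax v (Finset.mem_univ v)
    obtain ⟨T, hTv, hTu⟩ := Finset.not_disjoint_iff.1 hmeet
    exact ⟨⟨u, hu⟩, (Finset.mem_filter.1 hTu).2.2 (Finset.mem_filter.1 hTv).2.1⟩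

theorem exists_chromaticLE_of_fracChromaticLE (m : ℕ) [NeZero m] (p : ℕ) :
    ∃ n : ℕ, ∀ (V : Type*) [Finite V] (E : Finset (Finset V)), (∀ e ∈ E, e.Nonempty ∧ #e ≤ m) →
      ColorfulHelly E m → FracChromaticLE E p → ChromaticLE E n := by
  obtain ⟨β, hβ, hsel⟩ := exists_selection m
  let R := Fin m → Fin m
  refine ⟨⌈(p : ℝ) ^ Fintype.card R / β⌉₊, fun V _ E hE hC ⟨s, hs, σ, hσ, hcover⟩ => ?_⟩
  refine chromaticLE_of_forall_le_card (X := R → Fin (p * s)) (W := fun T => ⋂ r, σ (T r))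
    (b := β * s ^ Fintype.card R) (by positivity) ?_ fun v => ?_
  · calc (Fintype.card (R → Fin (p * s)) : ℝ)
        = p ^ Fintype.card R / β * (β * s ^ Fintype.card R) := by
          rw [Fintype.card_fun, Fintype.card_fin]
          push_cast
          rw [mul_pow]
          field_simp
      _ ≤ _ := by gcongr; exact Nat.le_ceil _
  · let Y := {i // v ∈ σ i}
    have hY : s ≤ Fintype.card Y := (hcover v).trans_eq (Fintype.card_subtype _).symm
    have : Nonempty Y := Fintype.card_pos_iff.1 (hs.trans_le hY)
    obtain ⟨τ, hτ, hcard⟩ := hsel V E hE hC Y (fun i => σ i) fun i => hσ i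
    refine ⟨τ, hτ, ?_⟩
    calc β * (s : ℝ) ^ Fintype.card R ≤ β * Fintype.card Y ^ Fintype.card R := by gcongr
      _ ≤ #{T : R → Y | ⋂ r, σ (T r) ⊆ τ} := hcard
      _ ≤ _ := Nat.cast_le.2 (Finset.card_le_card_of_injOn (fun T r => (T r : Fin (p * s))) ?_
          fun T _ T' _ h => funext fun r => Subtype.ext (congrFun h r))
    intro T hT
    simpa using ⟨fun r => (T r).2, by simpa using hT⟩

end Coloring

/-- The class `H_k(m)` of `k`-uniform hypergraphs with property `T_k(m)` is
χ-bounded: there is `f` with `χ(H) ≤ f (ω(H))` for all such hypergraphs. -/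
theorem Hkm_chi_bounded (m k : ℕ) (hk : 2 ≤ k) (hkm : k ≤ m) :
    ∃ f : ℕ → ℕ, ∀ (V : Type u) [Fintype V] [DecidableEq V] (E : Finset (Finset V)),
      (∀ e ∈ E, e.card = k) → E.Nonempty → PropT E k m →
      ∀ w : ℕ, CliqueNumLE E k w → ChromaticLE E (f w) := by
  have : NeZero m := ⟨by omega⟩
  choose β hβ hweight using exists_mul_sum_le_sum_isIndep hk hkm
  choose p hp using fun w => exists_fracChromaticLE (hβ w).1 ((hβ w).2.trans one_le_two)
  choose n hn using fun w => exists_chromaticLE_of_fracChromaticLE m (p w)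
  refine ⟨n, fun V _ _ E hE _ hT w hω => ?_⟩
  have hsize := nonempty_and_card_le_of_card_eq hE (by omega) hkm
  have hC := hT.colorfulHelly
  exact hn w V E hsize hC (hp w V E (hweight w V E hE hC hω))
end
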